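/- There are constants c, c' > 0 such that for any pair (Γ_i, L_j), any integer k ≥ c'·γ_{i+1}^{−2}, and any 0 < δ < 1, with probability at least 1 − δ over a training set S ∼ D^n, both sup over w ∈ H(Γ_i, L_j) of | E_{(x,y)∼D}[φ(y⟨w,x⟩)] − E_{(x,y)∼S}[φ(y⟨w,x⟩)] | and sup over w ∈ H(Γ_i, L_j) of | E_{(x,y)∼D}[ρ(y⟨w,x⟩)] − E_{(x,y)∼S}[ρ(y⟨w,x⟩)] | are at most c·exp(−γ_{i+1}²k/c)·sqrt( (k + γ_{i+1}^{−2} + ln(e/δ))/n ). -/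

import Mathlib

open MeasureTheory ProbabilityTheory

noncomputable section

/-- Dot product on `Fin m → ℝ`. -/
def dotp {m : ℕ} (w x : Fin m → ℝ) : ℝ := ∑ j, w j * x j

/-- Margin loss `L_D^γ(w)` of `w` under a distribution `D` on `ℝ^m × ℝ`
(labels are encoded as reals in `{-1,1}`). -/
def lossD {m : ℕ} (D : Measure ((Fin m → ℝ) × ℝ)) (γ : ℝ) (w : Fin m → ℝ) : ℝ :=
  (D {p | p.2 * dotp w p.1 ≤ γ}).toReal

/-- Empirical margin loss `L_S^γ(w)` on a training set `S` of `n` labeled points. -/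
def lossS {m n : ℕ} (S : Fin n → (Fin m → ℝ) × ℝ) (γ : ℝ) (w : Fin m → ℝ) : ℝ :=
  (Nat.card {i : Fin n // (S i).2 * dotp w (S i).1 ≤ γ} : ℝ) / n

/-- The i.i.d. sample measure `D^n` over training sets of size `n`. -/
def trainM {m : ℕ} (D : Measure ((Fin m → ℝ) × ℝ)) (n : ℕ) :
    Measure (Fin n → (Fin m → ℝ) × ℝ) := Measure.pi fun _ => D

/-- Spacing of the rounding grid: `(10 √k)⁻¹`. -/
def gridStep (k : ℕ) : ℝ := (10 * Real.sqrt k)⁻¹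

/-- The largest grid point `(1/2)(10√k)⁻¹ + z(10√k)⁻¹ ≤ g`. -/
def roundDown (k : ℕ) (g : ℝ) : ℝ :=
  gridStep k / 2 + (⌊(g - gridStep k / 2) / gridStep k⌋ : ℝ) * gridStep k

/-- The probability `p(z)` of rounding `g` down, chosen so the rounding is unbiased. -/
def roundProb (k : ℕ) (g : ℝ) : ℝ := 1 - (g - roundDown k g) / gridStep k

/-- Matrix-vector product, `(Aw)_i = ∑ j A i j * w j`. -/
def matVec {k m : ℕ} (A : Fin k → Fin m → ℝ) (w : Fin m → ℝ) : Fin k → ℝ :=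
  fun i => ∑ j, A i j * w j

/-- The randomized rounding `h_{A,t}(w)` of `Aw` to the grid. -/
def hRound {k m : ℕ} (A : Fin k → Fin m → ℝ) (t : Fin k → ℝ) (w : Fin m → ℝ) :
    Fin k → ℝ :=
  fun i => if t i ≤ roundProb k (matVec A w i)
    then roundDown k (matVec A w i)
    else roundDown k (matVec A w i) + gridStep k

/-- The joint law of `(A, t)`: `A` has i.i.d. `N(0,1/k)` entries and `t` has i.i.d.
uniform `[0,1]` coordinates, independent of `A`. -/
def roundMeasure (k m : ℕ) : Measure ((Fin k → Fin m → ℝ) × (Fin k → ℝ)) :=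
  (Measure.pi fun _ : Fin k => Measure.pi fun _ : Fin m =>
      gaussianReal 0 (k : NNReal)⁻¹).prod
    (Measure.pi fun _ : Fin k => volume.restrict (Set.Icc (0 : ℝ) 1))

/-- Reduced setup: the data domain `X ⊆ S^d ⊂ ℝ^{d+1}` of unit vectors whose first
`d` coordinates have norm at most `cγ`. -/
def Xset (d : ℕ) (cγ : ℝ) : Set (Fin (d+1) → ℝ) :=
  {x | (∑ j, x j ^ 2) = 1 ∧ (∑ j : Fin d, x j.castSucc ^ 2) ≤ cγ ^ 2}

/-- Reduced setup: the hypothesis class `H = S^{d-1} × {0} ⊂ ℝ^{d+1}`. -/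
def Hset (d : ℕ) : Set (Fin (d+1) → ℝ) :=
  {w | (∑ j, w j ^ 2) = 1 ∧ w (Fin.last d) = 0}

/-- `γ_i = 2^{i-1} n^{-1/2}`. -/
def γlo (n i : ℕ) : ℝ := 2 ^ (i - 1) / Real.sqrt n

/-- `γ_{i+1} = 2^i n^{-1/2}`. -/
def γhi (n i : ℕ) : ℝ := 2 ^ i / Real.sqrt n

/-- `ℓ_{j+1} = 2^j n^{-1}`. -/
def ellhi (n j : ℕ) : ℝ := 2 ^ j / n

/-- The interval `L_j`: `L_0 = [0, n⁻¹]`, and `L_j = (2^{j-1}/n, 2^j/n]` for `j ≥ 1`. -/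
def Lset (n j : ℕ) : Set ℝ :=
  if j = 0 then Set.Icc 0 (n : ℝ)⁻¹
  else Set.Ioc ((2 : ℝ) ^ (j - 1) / n) ((2 : ℝ) ^ j / n)

/-- Margin loss of `h ∈ ℝ^k` under the pushforward distribution `A·D`. -/
def kLossD {k m : ℕ} (D : Measure ((Fin m → ℝ) × ℝ)) (γ : ℝ) (h : Fin k → ℝ)
    (A : Fin k → Fin m → ℝ) : ℝ :=
  (D {q | q.2 * (∑ r, h r * ∑ s, A r s * q.1 s) ≤ γ}).toReal

/-- Empirical margin loss of `h ∈ ℝ^k` on the transformed training set `A·S`. -/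
def kLossS {k m n : ℕ} (S : Fin n → (Fin m → ℝ) × ℝ) (γ : ℝ) (h : Fin k → ℝ)
    (A : Fin k → Fin m → ℝ) : ℝ :=
  (Nat.card {i : Fin n // (S i).2 * (∑ r, h r * ∑ s, A r s * (S i).1 s) ≤ γ} : ℝ) / n

/-- Specification of the function `φ` from the paper, for margin parameter `γi`:
on `[-cγ, 0]` it equals the probability (over the randomized rounding) that the rounded
margin exceeds `γi/2` given original margin `α`; on `(0, γi]` it interpolates linearly to
`0`; on `(γi, cγ]` it is `0`. -/
def phiSpec (d k : ℕ) (cγ γi : ℝ) (φ : ℝ → ℝ) : Prop :=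
  (∀ (w x : Fin (d+1) → ℝ) (y : ℝ), w ∈ Hset d → x ∈ Xset d cγ →
      (y = 1 ∨ y = -1) → y * dotp w x ≤ 0 →
      φ (y * dotp w x) =
        (roundMeasure k (d+1)
          {p | γi / 2 < y * ∑ r, hRound p.1 p.2 w r * ∑ s, p.1 r s * x s}).toReal) ∧
  (∀ α : ℝ, 0 < α → α ≤ γi → φ α = ((γi - α) / γi) * φ 0) ∧
  (∀ α : ℝ, γi < α → α ≤ cγ → φ α = 0)

/-- Specification of the function `ρ` from the paper, for margin parameter `γi`. -/
def rhoSpec (d k : ℕ) (cγ γi : ℝ) (ρ : ℝ → ℝ) : Prop :=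
  (∀ (w x : Fin (d+1) → ℝ) (y : ℝ), w ∈ Hset d → x ∈ Xset d cγ →
      (y = 1 ∨ y = -1) → γi < y * dotp w x →
      ρ (y * dotp w x) =
        (roundMeasure k (d+1)
          {p | y * ∑ r, hRound p.1 p.2 w r * ∑ s, p.1 r s * x s ≤ γi / 2}).toReal) ∧
  (∀ α : ℝ, 0 < α → α ≤ γi →
      ∀ (w x : Fin (d+1) → ℝ) (y : ℝ), w ∈ Hset d → x ∈ Xset d cγ →
      (y = 1 ∨ y = -1) → y * dotp w x = γi →
      ρ α = (α / γi) *
        (roundMeasure k (d+1)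
          {p | y * ∑ r, hRound p.1 p.2 w r * ∑ s, p.1 r s * x s ≤ γi / 2}).toReal) ∧
  (∀ α : ℝ, -cγ ≤ α → α ≤ 0 → ρ α = 0)

open scoped NNReal

/-!
Since the law of the margin depends only on `α = y ⟨w, x⟩`, it may be computed for `w` a basis
vector and `x` in the plane of `w` and a second one, so that only two columns of `A` enter.
Conditionally on the column along `w` and on the thresholds, the rounded margin is Gaussian, so `φ`
and `ρ` are averages of a normal tail at an argument of order `√k γ`. They are therefore bounded by
a multiple of `E = exp (-k γ² / 3200)`; differentiating the tail in `α` shows that they are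
Lipschitz with constant of order `√k E`, as is the linear piece, because `1 / γ ≤ 2 √k`. By the
contraction principle the expected largest deviation over the unit ball is then of order
`√k E / √n`, and bounded differences add `E √(log (1 / δ) / n)`.
-/

section BoundedDifferences

variable {Ω Ω' : Type*} [MeasurableSpace Ω] [MeasurableSpace Ω']

theorem hasSubgaussianMGF_prod_add {μ : Measure Ω} {ν : Measure Ω'} [SFinite μ] [SFinite ν]
    {X : Ω → ℝ} {Y : Ω × Ω' → ℝ} {a b : ℝ≥0} (hX : HasSubgaussianMGF X a μ) (hYm : Measurable Y)
    (hY : ∀ x, HasSubgaussianMGF (fun y => Y (x, y)) b ν) :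
    HasSubgaussianMGF (fun p => X p.1 + Y p) (a + b) (μ.prod ν) := by
  have hsplit (t : ℝ) (x : Ω) (y : Ω') :
      Real.exp (t * (X x + Y (x, y))) = Real.exp (t * X x) * Real.exp (t * Y (x, y)) := by
    rw [mul_add, Real.exp_add]
  have hslice (t : ℝ) (x : Ω) : ∫ y, Real.exp (t * (X x + Y (x, y))) ∂ν ≤
      Real.exp (t * X x) * Real.exp (b * t ^ 2 / 2) := by
    simp_rw [hsplit, integral_const_mul]
    exact mul_le_mul_of_nonneg_left ((hY x).mgf_le t) (Real.exp_pos _).le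
  have hmeas (t : ℝ) :
      AEStronglyMeasurable (fun p : Ω × Ω' => Real.exp (t * (X p.1 + Y p))) (μ.prod ν) := by
    have := hX.aemeasurable.comp_fst (ν := ν)
    exact (Real.measurable_exp.comp_aemeasurable
      ((this.add hYm.aemeasurable).const_mul t)).aestronglyMeasurable
  have hint (t : ℝ) : Integrable (fun p : Ω × Ω' => Real.exp (t * (X p.1 + Y p))) (μ.prod ν) := by
    refine (integrable_prod_iff (hmeas t)).2 ⟨ae_of_all _ fun x => ?_, ?_⟩
    · simp_rw [hsplit]
      exact ((hY x).integrable_exp_mul t).const_mul _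
    · refine ((hX.integrable_exp_mul t).mul_const (Real.exp (b * t ^ 2 / 2))).mono'
        (hmeas t).norm.integral_prod_right' (ae_of_all _ fun x => ?_)
      simp_rw [Real.norm_of_nonneg (Real.exp_pos _).le]
      rw [Real.norm_of_nonneg (integral_nonneg fun _ => (Real.exp_pos _).le)]
      exact hslice t x
  refine ⟨hint, fun t => ?_⟩
  calc mgf (fun p => X p.1 + Y p) (μ.prod ν) t
      = ∫ x, ∫ y, Real.exp (t * (X x + Y (x, y))) ∂ν ∂μ := integral_prod _ (hint t)
    _ ≤ ∫ x, Real.exp (t * X x) * Real.exp (b * t ^ 2 / 2) ∂μ :=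
      integral_mono (hint t).integral_prod_left ((hX.integrable_exp_mul t).mul_const _) (hslice t)
    _ = mgf X μ t * Real.exp (b * t ^ 2 / 2) := integral_mul_const _ _
    _ ≤ Real.exp (a * t ^ 2 / 2) * Real.exp (b * t ^ 2 / 2) := by
      gcongr
      exact hX.mgf_le t
    _ = Real.exp ((a + b : ℝ≥0) * t ^ 2 / 2) := by
      rw [← Real.exp_add]
      push_cast
      ring_nf

theorem hasSubgaussianMGF_of_sub_le {μ : Measure Ω} [IsProbabilityMeasure μ] {X : Ω → ℝ}
    (hX : Measurable X) {c : ℝ≥0} (h : ∀ x y, X x - X y ≤ c) :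
    HasSubgaussianMGF (fun x => X x - ∫ y, X y ∂μ) ((c / 2) ^ 2) μ := by
  obtain ⟨x₀⟩ := nonempty_of_isProbabilityMeasure μ
  have hbdd : BddBelow (Set.range X) := ⟨X x₀ - c, by rintro _ ⟨x, rfl⟩; linarith [h x₀ x]⟩
  have hne : Nonempty Ω := ⟨x₀⟩
  have hmem (x : Ω) : X x ∈ Set.Icc (⨅ y, X y) ((⨅ y, X y) + c) :=
    ⟨ciInf_le hbdd x, sub_le_iff_le_add.1 (le_ciInf fun y => by linarith [h x y])⟩
  simpa using hasSubgaussianMGF_of_mem_Icc hX.aemeasurable (ae_of_all μ hmem)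

theorem abs_sub_le_sum_of_bounded_differences {ι : Type*} [Fintype ι] [DecidableEq ι]
    {α : ι → Type*} {F : (∀ i, α i) → ℝ} {c : ι → ℝ}
    (hF : ∀ x i y, |F (Function.update x i y) - F x| ≤ c i) (x y : ∀ i, α i) :
    |F y - F x| ≤ ∑ i, c i := by
  suffices ∀ s : Finset ι, |F (s.piecewise y x) - F x| ≤ ∑ i ∈ s, c i by
    simpa using this Finset.univ
  intro s
  induction s using Finset.induction_on with
  | empty => simp
  | insert i s hi ih =>
    rw [Finset.piecewise_insert, Finset.sum_insert hi]
    exact (abs_sub_le _ (F (s.piecewise y x)) _).trans (add_le_add (hF _ _ _) ih)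

theorem integrable_of_bounded_differences {n : ℕ} {μ : Measure (Fin n → Ω)}
    [IsProbabilityMeasure μ] {F : (Fin n → Ω) → ℝ} (hF : Measurable F) {c : Fin n → ℝ}
    (hc : ∀ x i y, |F (Function.update x i y) - F x| ≤ c i) : Integrable F μ := by
  obtain ⟨x₀⟩ := nonempty_of_isProbabilityMeasure μ
  refine Integrable.of_bound hF.aestronglyMeasurable (|F x₀| + ∑ i, c i) (ae_of_all _ fun x => ?_)
  rw [Real.norm_eq_abs, ← sub_le_iff_le_add']
  exact (abs_sub_abs_le_abs_sub _ _).trans (abs_sub_le_sum_of_bounded_differences hc x₀ x)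

theorem measurePreserving_finCons {n : ℕ} (μ : Fin (n + 1) → Measure Ω) [∀ i, SigmaFinite (μ i)] :
    MeasurePreserving (fun p : Ω × (Fin n → Ω) => (Fin.cons p.1 p.2 : Fin (n + 1) → Ω))
      ((μ 0).prod (Measure.pi fun i : Fin n => μ i.succ)) (Measure.pi μ) := by
  simpa [MeasurableEquiv.piFinSuccAbove, Fin.insertNthEquiv] using
    (measurePreserving_piFinSuccAbove μ 0).symm

theorem integral_pi_finSucc {n : ℕ} (μ : Fin (n + 1) → Measure Ω) [∀ i, SigmaFinite (μ i)]
    {F : (Fin (n + 1) → Ω) → ℝ} (hF : Integrable F (Measure.pi μ)) :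
    ∫ x, F x ∂Measure.pi μ =
      ∫ z, ∫ x : Fin n → Ω, F (Fin.cons z x) ∂(Measure.pi fun i => μ i.succ) ∂μ 0 := by
  have hcons := measurePreserving_finCons μ
  rw [← hcons.map_eq] at hF ⊢
  rw [integral_map hcons.aemeasurable hF.aestronglyMeasurable]
  exact integral_prod _ (hF.comp_measurable hcons.measurable)

theorem hasSubgaussianMGF_integral_finCons {n : ℕ} (μ : Fin (n + 1) → Measure Ω)
    [∀ i, IsProbabilityMeasure (μ i)] {F : (Fin (n + 1) → Ω) → ℝ} (hF : Measurable F)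
    {c : Fin (n + 1) → ℝ≥0} (hc : ∀ x i y, |F (Function.update x i y) - F x| ≤ c i) :
    HasSubgaussianMGF (fun z => (∫ x : Fin n → Ω, F (Fin.cons z x) ∂Measure.pi fun i => μ i.succ) -
      ∫ z', ∫ x : Fin n → Ω, F (Fin.cons z' x) ∂(Measure.pi fun i => μ i.succ) ∂μ 0)
      ((c 0 / 2) ^ 2) (μ 0) := by
  have hFc : Measurable fun p : Ω × (Fin n → Ω) => F (Fin.cons p.1 p.2) :=
    hF.comp (measurePreserving_finCons μ).measurable
  have hslice_int (z : Ω) : Integrable (fun x : Fin n → Ω => F (Fin.cons z x))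
      (Measure.pi fun i => μ i.succ) :=
    integrable_of_bounded_differences (c := fun i : Fin n => c i.succ)
      (hFc.comp measurable_prodMk_left) fun x i y => by
        rw [Fin.cons_update]
        exact hc _ _ _
  refine hasSubgaussianMGF_of_sub_le
    (hFc.stronglyMeasurable.integral_prod_right
    (ν := Measure.pi fun i : Fin n => μ i.succ)).measurable fun z z' => ?_
  rw [← integral_sub (hslice_int z) (hslice_int z')]
  refine (integral_mono ((hslice_int z).sub (hslice_int z')) (integrable_const (c 0 : ℝ))
    fun x => ?_).trans_eq (by simp)
  have := (le_abs_self _).trans (hc (Fin.cons z' x) 0 z)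
  rwa [Fin.update_cons_zero] at this

/-- McDiarmid's inequality at the level of moment generating functions: the first coordinate
contributes the Hoeffding term of the conditional mean, the others are handled by induction. -/
theorem hasSubgaussianMGF_of_bounded_differences {n : ℕ} (μ : Fin n → Measure Ω)
    [∀ i, IsProbabilityMeasure (μ i)] {F : (Fin n → Ω) → ℝ} (hF : Measurable F)
    {c : Fin n → ℝ≥0} (hc : ∀ x i y, |F (Function.update x i y) - F x| ≤ c i) :
    HasSubgaussianMGF (fun x => F x - ∫ y, F y ∂Measure.pi μ) (∑ i, (c i / 2) ^ 2)
      (Measure.pi μ) := by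
  induction n with
  | zero =>
    have hconst (x : Fin 0 → Ω) : F x - ∫ y, F y ∂Measure.pi μ = 0 := by
      simp only [Subsingleton.elim _ x, integral_const, probReal_univ, one_smul, sub_self]
    simp [hconst]
  | succ n ih =>
    let ν := Measure.pi fun i : Fin n => μ i.succ
    have hcons := measurePreserving_finCons μ
    have hFc : Measurable fun p : Ω × (Fin n → Ω) => F (Fin.cons p.1 p.2) :=
      hF.comp hcons.measurable
    let G (z : Ω) : ℝ := ∫ x, F (Fin.cons z x) ∂ν
    have hGm : Measurable G :=
      (hFc.stronglyMeasurable.integral_prod_right (ν := ν)).measurable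
    have hc_tail (z : Ω) (x : Fin n → Ω) (i : Fin n) (y : Ω) :
        |F (Fin.cons z (Function.update x i y)) - F (Fin.cons z x)| ≤ c i.succ := by
      rw [Fin.cons_update]
      exact hc _ _ _
    have hsplit : HasSubgaussianMGF (fun p : Ω × (Fin n → Ω) =>
        G p.1 - ∫ z, G z ∂μ 0 + (F (Fin.cons p.1 p.2) - G p.1))
        ((c 0 / 2) ^ 2 + ∑ i : Fin n, (c i.succ / 2) ^ 2) ((μ 0).prod ν) :=
      hasSubgaussianMGF_prod_add (hasSubgaussianMGF_integral_finCons μ hF hc)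
        (hFc.sub (hGm.comp measurable_fst)) fun z =>
          ih _ (hFc.comp measurable_prodMk_left) (hc_tail z)
    have hFm := hF.sub_const (∫ z, G z ∂μ 0)
    rw [integral_pi_finSucc μ (integrable_of_bounded_differences hF hc), Fin.sum_univ_succ]
    refine hsplit.congr_identDistrib ⟨hsplit.aemeasurable, hFm.aemeasurable, ?_⟩
    rw [← hcons.map_eq, Measure.map_map hFm hcons.measurable]
    simp only [Function.comp_def, sub_add_sub_cancel', ν]

theorem measure_lt_le_of_bounded_differences {n : ℕ} (μ : Fin n → Measure Ω)
    [∀ i, IsProbabilityMeasure (μ i)] {F : (Fin n → Ω) → ℝ} (hF : Measurable F) {c : ℝ}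
    (hc₀ : 0 < c) (hc : ∀ x i y, |F (Function.update x i y) - F x| ≤ c) (hn : 1 ≤ n) {δ : ℝ}
    (hδ : 0 < δ) (hδ₁ : δ ≤ 1) :
    Measure.pi μ {x | ∫ y, F y ∂Measure.pi μ + n * (c * √(Real.log (1 / δ) / (2 * n))) < F x} ≤
      ENNReal.ofReal δ := by
  have : (0 : ℝ) < n := by exact_mod_cast hn
  have hlog : 0 ≤ Real.log (1 / δ) := Real.log_nonneg (one_le_one_div hδ hδ₁)
  have hsub := hasSubgaussianMGF_of_bounded_differences μ hF (c := fun _ => c.toNNReal)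
    (by simpa only [Real.coe_toNNReal _ hc₀.le] using hc)
  let ε : ℝ := n * (c * √(Real.log (1 / δ) / (2 * n)))
  have hexp : Real.exp (-ε ^ 2 / (2 * (∑ _i : Fin n, (c.toNNReal / 2) ^ 2 : ℝ≥0))) = δ := by
    simp only [Finset.sum_const, Finset.card_univ, Fintype.card_fin, nsmul_eq_mul, NNReal.coe_mul,
      NNReal.coe_natCast, NNReal.coe_pow, NNReal.coe_div, NNReal.coe_ofNat,
      Real.coe_toNNReal _ hc₀.le, ε, mul_pow, Real.sq_sqrt
        (show 0 ≤ Real.log (1 / δ) / (2 * n) by positivity)]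
    rw [show -((n : ℝ) ^ 2 * (c ^ 2 * (Real.log (1 / δ) / (2 * n)))) / (2 * (n * (c / 2) ^ 2)) =
      -Real.log (1 / δ) by field_simp, one_div, Real.log_inv, neg_neg, Real.exp_log hδ]
  rw [ENNReal.le_ofReal_iff_toReal_le (measure_ne_top _ _) hδ.le]
  refine (measureReal_mono fun x hx => ?_).trans
    ((hsub.measure_ge_le (ε := ε) (by positivity)).trans_eq hexp)
  rw [Set.mem_ofPred_eq] at hx
  exact (lt_sub_iff_add_lt'.2 hx).le

end BoundedDifferences

section Contraction

variable {Ω ι : Type*} [MeasurableSpace Ω] {μ : Measure Ω} {a : ι → ℝ} {g u : ι → Ω → ℝ}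
  {h : Ω → ℝ}

theorem bddAbove_range_of_abs_le {b : ι → ℝ} {C : ℝ} (hb : ∀ i, |b i| ≤ C) :
    BddAbove (Set.range b) :=
  ⟨C, by rintro _ ⟨i, rfl⟩; exact (le_abs_self _).trans (hb i)⟩

theorem abs_iSup_le_of_abs_le [Nonempty ι] {b : ι → ℝ} {C : ℝ} (hb : ∀ i, |b i| ≤ C) :
    |⨆ i, b i| ≤ C := by
  obtain ⟨i⟩ := ‹Nonempty ι›
  refine abs_le.2 ⟨?_, ciSup_le fun i => (le_abs_self _).trans (hb i)⟩
  exact (abs_le.1 (hb i)).1.trans (le_ciSup (bddAbove_range_of_abs_le hb) i)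

theorem integrable_iSup_of_abs_le [Countable ι] [Nonempty ι] (hg : ∀ i, Measurable (g i))
    (hh : Integrable h μ) (hgh : ∀ i ω, |g i ω| ≤ h ω) : Integrable (fun ω => ⨆ i, g i ω) μ :=
  hh.mono' (Measurable.iSup hg).aestronglyMeasurable
    (ae_of_all _ fun ω => abs_iSup_le_of_abs_le fun i => hgh i ω)

theorem iSup_add_iSup_sub_le_of_abs_sub_le [Nonempty ι] {b c : ι → ℝ}
    (hadd : BddAbove (Set.range fun i => a i + c i))
    (hsub : BddAbove (Set.range fun i => a i - c i)) (h : ∀ i j, |b i - b j| ≤ |c i - c j|) :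
    (⨆ i, (a i + b i)) + (⨆ i, (a i - b i)) ≤ (⨆ i, (a i + c i)) + (⨆ i, (a i - c i)) := by
  rw [← le_sub_iff_add_le]
  refine ciSup_le fun i => ?_
  rw [le_sub_comm]
  refine ciSup_le fun j => ?_
  have hij := (le_abs_self _).trans (h i j)
  rcases abs_cases (c i - c j) with ⟨e, _⟩ | ⟨e, _⟩
  · linarith [le_ciSup hadd i, le_ciSup hsub j]
  · linarith [le_ciSup hadd j, le_ciSup hsub i]

theorem integrable_iSup_const_add [IsFiniteMeasure μ] [Countable ι] [Nonempty ι]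
    (hg : ∀ i, Measurable (g i)) (hh : Integrable h μ) {A : ℝ} (ha : ∀ i, |a i| ≤ A)
    (hgh : ∀ i ω, |g i ω| ≤ h ω) : Integrable (fun ω => ⨆ i, (a i + g i ω)) μ :=
  integrable_iSup_of_abs_le (fun i => (hg i).const_add _) ((integrable_const A).add hh)
    fun i ω => (abs_add_le _ _).trans (add_le_add (ha i) (hgh i ω))

theorem integrable_iSup_const_sub [IsFiniteMeasure μ] [Countable ι] [Nonempty ι]
    (hg : ∀ i, Measurable (g i)) (hh : Integrable h μ) {A : ℝ} (ha : ∀ i, |a i| ≤ A)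
    (hgh : ∀ i ω, |g i ω| ≤ h ω) : Integrable (fun ω => ⨆ i, (a i - g i ω)) μ := by
  simpa only [sub_eq_add_neg] using
    integrable_iSup_const_add (g := fun i ω => -g i ω) (fun i => (hg i).neg) hh ha
      fun i ω => (abs_neg _).trans_le (hgh i ω)

theorem integral_le_integral_iSup [Countable ι] [Nonempty ι] (hg : ∀ i, Measurable (g i))
    (hh : Integrable h μ) (hgh : ∀ i ω, |g i ω| ≤ h ω) (i : ι) :
    ∫ ω, g i ω ∂μ ≤ ∫ ω, ⨆ i, g i ω ∂μ :=
  integral_mono (hh.mono' (hg i).aestronglyMeasurable (ae_of_all _ (hgh i)))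
    (integrable_iSup_of_abs_le hg hh hgh)
    fun ω => le_ciSup (bddAbove_range_of_abs_le fun i => hgh i ω) i

theorem integral_iSup_le_integral_symmetrization [IsProbabilityMeasure μ] [Countable ι]
    [Nonempty ι] (hg : ∀ i, Measurable (g i)) (hh : Integrable h μ) {A : ℝ} (ha : ∀ i, |a i| ≤ A)
    (hgh : ∀ i ω, |g i ω| ≤ h ω) :
    ∫ z, ⨆ i, (a i + (∫ z', g i z' ∂μ - g i z)) ∂μ ≤
      ∫ z, ((⨆ i, (a i + 2 * g i z)) + ⨆ i, (a i - 2 * g i z)) / 2 ∂μ := by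
  have hg₂ (i : ι) : Measurable fun ω => 2 * g i ω := (hg i).const_mul 2
  have hh₂ := hh.const_mul 2
  have hgh₂ (i : ι) (ω : Ω) : |2 * g i ω| ≤ 2 * h ω := by
    rw [abs_mul, abs_two]
    exact mul_le_mul_of_nonneg_left (hgh i ω) zero_le_two
  have hadd := integrable_iSup_const_add hg₂ hh₂ ha hgh₂
  have hsub := integrable_iSup_const_sub hg₂ hh₂ ha hgh₂
  have hmean (i : ι) : a i + 2 * ∫ z, g i z ∂μ ≤ ∫ z, ⨆ i, (a i + 2 * g i z) ∂μ := by
    have hgi : Integrable (g i) μ := hh.mono' (hg i).aestronglyMeasurable (ae_of_all _ (hgh i))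
    have := integral_le_integral_iSup (g := fun i z => a i + 2 * g i z) (μ := μ)
      (fun i => (hg₂ i).const_add _) ((integrable_const A).add hh₂)
      (fun i ω => (abs_add_le _ _).trans (add_le_add (ha i) (hgh₂ i ω))) i
    rwa [integral_add (integrable_const _) (hgi.const_mul 2), integral_const_mul,
      integral_const, probReal_univ, one_smul] at this
  have hpoint (z : Ω) : ⨆ i, (a i + (∫ z', g i z' ∂μ - g i z)) ≤
      (∫ z', (⨆ i, (a i + 2 * g i z')) ∂μ + ⨆ i, (a i - 2 * g i z)) / 2 :=
    ciSup_le fun i => by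
      have hz : a i - 2 * g i z ≤ ⨆ i, (a i - 2 * g i z) :=
        le_ciSup (f := fun i => a i - 2 * g i z)
          (bddAbove_range_of_abs_le fun i => (abs_sub _ _).trans (add_le_add (ha i) (hgh₂ i z))) i
      linarith [hmean i]
  have hleft : Integrable (fun z => ⨆ i, (a i + (∫ z', g i z' ∂μ - g i z))) μ :=
    integrable_iSup_const_add (fun i => (hg i).const_sub _)
      ((integrable_const (∫ z, h z ∂μ)).add hh) ha fun i ω => (abs_sub _ _).trans
        (add_le_add (norm_integral_le_of_norm_le (f := g i) hh (ae_of_all _ (hgh i))) (hgh i ω))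
  calc _ ≤ ∫ z, (∫ z', (⨆ i, (a i + 2 * g i z')) ∂μ + ⨆ i, (a i - 2 * g i z)) / 2 ∂μ :=
        integral_mono hleft (((integrable_const _).add hsub).div_const 2) hpoint
    _ = _ := by
        simp only [integral_div, integral_add (integrable_const _) hsub, integral_add hadd hsub,
          integral_const, probReal_univ, one_smul]

theorem integral_iSup_le_integral_contraction [IsProbabilityMeasure μ] [Countable ι] [Nonempty ι]
    (hg : ∀ i, Measurable (g i)) (hu : ∀ i, Measurable (u i)) (hh : Integrable h μ) {A : ℝ}
    (ha : ∀ i, |a i| ≤ A) (hgh : ∀ i ω, |2 * g i ω| ≤ h ω) (huh : ∀ i ω, |u i ω| ≤ h ω)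
    (hgu : ∀ i j ω, |2 * g i ω - 2 * g j ω| ≤ |u i ω - u j ω|) :
    ∫ z, ⨆ i, (a i + (∫ z', g i z' ∂μ - g i z)) ∂μ ≤
      ∫ z, ((⨆ i, (a i + u i z)) + ⨆ i, (a i - u i z)) / 2 ∂μ := by
  have hg₂ (i : ι) : Measurable fun ω => 2 * g i ω := (hg i).const_mul 2
  have hgh' (i : ι) (ω : Ω) : |g i ω| ≤ h ω := by
    have := hgh i ω
    rw [abs_mul, abs_two] at this
    linarith [abs_nonneg (g i ω)]
  refine (integral_iSup_le_integral_symmetrization hg hh ha hgh').trans (integral_mono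
    (((integrable_iSup_const_add hg₂ hh ha hgh).add
      (integrable_iSup_const_sub hg₂ hh ha hgh)).div_const 2)
    (((integrable_iSup_const_add hu hh ha huh).add
      (integrable_iSup_const_sub hu hh ha huh)).div_const 2)
    fun z => div_le_div_of_nonneg_right (iSup_add_iSup_sub_le_of_abs_sub_le
      (bddAbove_range_of_abs_le fun i => (abs_add_le _ _).trans (add_le_add (ha i) (huh i z)))
      (bddAbove_range_of_abs_le fun i => (abs_sub _ _).trans (add_le_add (ha i) (huh i z)))
      fun i j => hgu i j z) zero_le_two)

end Contraction

section UniformDeviation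

theorem integral_le_of_ae_le {Ω : Type*} [MeasurableSpace Ω] {μ : Measure Ω}
    [IsProbabilityMeasure μ] {g : Ω → ℝ} {C : ℝ} (hC : 0 ≤ C) (hg : ∀ᵐ ω ∂μ, g ω ≤ C) :
    ∫ ω, g ω ∂μ ≤ C := by
  by_cases hint : Integrable g μ
  · simpa using integral_mono_ae hint (integrable_const C) hg
  · rwa [integral_undef hint]

variable {E : Type*} [NormedAddCommGroup E] [InnerProductSpace ℝ E]

theorem abs_real_inner_le_of_norm_le_one {w : E} (hw : ‖w‖ ≤ 1) (v : E) : |inner ℝ w v| ≤ ‖v‖ :=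
  (abs_real_inner_le_norm w v).trans (mul_le_of_le_one_left (norm_nonneg v) hw)

theorem sqrt_norm_add_sq_add_sqrt_norm_sub_sq_le (v z : E) {b : ℝ} (hb : 0 ≤ b) :
    (√(‖v + z‖ ^ 2 + b) + √(‖v - z‖ ^ 2 + b)) / 2 ≤ √(‖v‖ ^ 2 + ‖z‖ ^ 2 + b) := by
  have hparallelogram := parallelogram_law_with_norm ℝ v z
  refine Real.le_sqrt_of_sq_le ?_
  have hadd := Real.sq_sqrt (show 0 ≤ ‖v + z‖ ^ 2 + b by positivity)
  have hsub := Real.sq_sqrt (show 0 ≤ ‖v - z‖ ^ 2 + b by positivity)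
  nlinarith [sq_nonneg (√(‖v + z‖ ^ 2 + b) - √(‖v - z‖ ^ 2 + b))]

variable [MeasurableSpace E]

/-- The error made by the single observation `z` as an estimate of the `μ`-mean of `f ⟪w, ·⟫`. -/
def deviation (μ : Measure E) (f : ℝ → ℝ) (w z : E) : ℝ :=
  ∫ z', f (inner ℝ w z') ∂μ - f (inner ℝ w z)

/-- The largest total deviation of the sample `S` over the family `w`, tilted by the linear
functional `⟪·, v⟫`. The tilt makes an induction on the sample size possible: contraction trades
an observation `z` for a shift of `v` by `±2Kz`. -/
def maxDeviation {ι : Type*} {n : ℕ} (μ : Measure E) (f : ℝ → ℝ) (w : ι → E) (v : E)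
    (S : Fin n → E) : ℝ :=
  ⨆ i, (inner ℝ (w i) v + ∑ r, deviation μ f (w i) (S r))

variable [BorelSpace E] [SecondCountableTopology E] {μ : Measure E} {f : ℝ → ℝ} {a b : ℝ}

theorem measurable_deviation (hf : Measurable f) (w : E) : Measurable (deviation μ f w) := by
  unfold deviation
  fun_prop

theorem measurable_maxDeviation_comp {Ω : Type*} [MeasurableSpace Ω]
    {ι : Type*} [Countable ι] {n : ℕ} {w : ι → E} (hf : Measurable f) {V : Ω → E}
    (hV : Measurable V) {X : Ω → Fin n → E} (hX : Measurable X) :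
    Measurable fun ω => maxDeviation μ f w (V ω) (X ω) :=
  Measurable.iSup fun i => (measurable_const.inner hV).add (Finset.measurable_sum _ fun r _ =>
    (measurable_deviation hf (w i)).comp ((measurable_pi_apply r).comp hX))

variable [IsProbabilityMeasure μ]

theorem abs_deviation_le (hf : Measurable f) (hfab : ∀ x, f x ∈ Set.Icc a b) (w z : E) :
    |deviation μ f w z| ≤ b - a := by
  have hint : Integrable (fun z => f (inner ℝ w z)) μ :=
    Integrable.of_mem_Icc a b (by fun_prop) (ae_of_all _ fun z => hfab _)
  have hle : ∫ z', f (inner ℝ w z') ∂μ ≤ b := by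
    simpa using integral_mono hint (integrable_const b) fun z' => (hfab _).2
  have hge : a ≤ ∫ z', f (inner ℝ w z') ∂μ := by
    simpa using integral_mono (integrable_const a) hint fun z' => (hfab _).1
  obtain ⟨haz, hzb⟩ := hfab (inner ℝ w z)
  exact abs_le.2 ⟨by unfold deviation; linarith, by unfold deviation; linarith⟩

theorem abs_inner_add_sum_deviation_le (hf : Measurable f) (hfab : ∀ x, f x ∈ Set.Icc a b)
    {w : E} (hw : ‖w‖ ≤ 1) (v : E) {n : ℕ} (S : Fin n → E) :
    |inner ℝ w v + ∑ r, deviation μ f w (S r)| ≤ ‖v‖ + n * (b - a) := by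
  refine (abs_add_le _ _).trans (add_le_add (abs_real_inner_le_of_norm_le_one hw v) ?_)
  calc |∑ r, deviation μ f w (S r)| ≤ ∑ r, |deviation μ f w (S r)| :=
        Finset.abs_sum_le_sum_abs _ _
    _ ≤ ∑ _r : Fin n, (b - a) := Finset.sum_le_sum fun r _ => abs_deviation_le hf hfab w (S r)
    _ = n * (b - a) := by
        rw [Finset.sum_const, Finset.card_univ, Fintype.card_fin, nsmul_eq_mul]

variable {ι : Type*} {w : ι → E} {n : ℕ}

theorem bddAbove_range_inner_add_sum_deviation (hf : Measurable f)
    (hfab : ∀ x, f x ∈ Set.Icc a b) (hw : ∀ i, ‖w i‖ ≤ 1) (v : E) (S : Fin n → E) :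
    BddAbove (Set.range fun i => inner ℝ (w i) v + ∑ r, deviation μ f (w i) (S r)) :=
  bddAbove_range_of_abs_le fun i => abs_inner_add_sum_deviation_le hf hfab (hw i) v S

variable [Nonempty ι]

theorem abs_maxDeviation_update_sub_le (hf : Measurable f) (hfab : ∀ x, f x ∈ Set.Icc a b)
    (hw : ∀ i, ‖w i‖ ≤ 1) (v : E) (S : Fin n → E) (r : Fin n) (z : E) :
    |maxDeviation μ f w v (Function.update S r z) - maxDeviation μ f w v S| ≤ b - a := by
  have hsum (i : ι) : ∑ q, deviation μ f (w i) (Function.update S r z q) -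
      ∑ q, deviation μ f (w i) (S q) = f (inner ℝ (w i) (S r)) - f (inner ℝ (w i) z) := by
    rw [← Finset.sum_sub_distrib, Finset.sum_eq_single r
      (fun q _ hq => by rw [Function.update_of_ne hq, sub_self]) (by simp), Function.update_self]
    simp only [deviation, sub_sub_sub_cancel_left]
  have hle (S : Fin n → E) (i : ι) :
      inner ℝ (w i) v + ∑ q, deviation μ f (w i) (S q) ≤ maxDeviation μ f w v S :=
    le_ciSup (bddAbove_range_inner_add_sum_deviation hf hfab hw v S) i
  rw [abs_sub_le_iff, sub_le_iff_le_add', sub_le_iff_le_add']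
  constructor <;> refine ciSup_le fun i => ?_
  · linarith [hle S i, hsum i, (hfab (inner ℝ (w i) (S r))).2, (hfab (inner ℝ (w i) z)).1]
  · linarith [hle (Function.update S r z) i, hsum i, (hfab (inner ℝ (w i) (S r))).1,
      (hfab (inner ℝ (w i) z)).2]

variable [Countable ι]

theorem integrable_maxDeviation_comp {Ω : Type*} [MeasurableSpace Ω] {ν : Measure Ω}
    [IsFiniteMeasure ν] (hf : Measurable f) (hfab : ∀ x, f x ∈ Set.Icc a b) (hw : ∀ i, ‖w i‖ ≤ 1)
    {V : Ω → E} (hVm : Measurable V) (hV : Integrable V ν) {X : Ω → Fin n → E}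
    (hX : Measurable X) : Integrable (fun ω => maxDeviation μ f w (V ω) (X ω)) ν :=
  (hV.norm.add (integrable_const (n * (b - a)))).mono'
    (measurable_maxDeviation_comp hf hVm hX).aestronglyMeasurable
    (ae_of_all _ fun ω => abs_iSup_le_of_abs_le fun i =>
      abs_inner_add_sum_deviation_le hf hfab (hw i) (V ω) (X ω))

variable {K : ℝ≥0}

theorem integral_maxDeviation_cons_le (hf : LipschitzWith K f) (hfab : ∀ x, f x ∈ Set.Icc a b)
    (hw : ∀ i, ‖w i‖ ≤ 1) (hμ : Integrable id μ) (v : E) (S : Fin n → E) :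
    ∫ z, maxDeviation μ f w v (Fin.cons z S : Fin (n + 1) → E) ∂μ ≤
      ∫ z, (maxDeviation μ f w (v + (2 * K : ℝ) • z) S +
        maxDeviation μ f w (v - (2 * K : ℝ) • z) S) / 2 ∂μ := by
  have hfm := hf.continuous.measurable
  let A (i : ι) : ℝ := inner ℝ (w i) v + ∑ r, deviation μ f (w i) (S r)
  have hcons (z : E) : maxDeviation μ f w v (Fin.cons z S : Fin (n + 1) → E) =
      ⨆ i, (A i + (∫ z', f (inner ℝ (w i) z') ∂μ - f (inner ℝ (w i) z))) := by
    simp only [maxDeviation, Fin.sum_univ_succ, Fin.cons_zero, Fin.cons_succ, A, deviation]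
    exact iSup_congr fun i => by ring
  have hadd (z : E) : maxDeviation μ f w (v + (2 * K : ℝ) • z) S =
      ⨆ i, (A i + 2 * K * inner ℝ (w i) z) := by
    simp only [maxDeviation, inner_add_right, inner_smul_right, A]
    exact iSup_congr fun i => by ring
  have hsub (z : E) : maxDeviation μ f w (v - (2 * K : ℝ) • z) S =
      ⨆ i, (A i - 2 * K * inner ℝ (w i) z) := by
    simp only [maxDeviation, inner_sub_right, inner_smul_right, A]
    exact iSup_congr fun i => by ring
  have hfM (x : ℝ) : |f x| ≤ max |a| |b| := abs_le_max_abs_abs (hfab x).1 (hfab x).2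
  have hK (x : ℝ) : |2 * K * x| = 2 * (K * |x|) := by
    rw [abs_mul, abs_of_nonneg (by positivity), mul_assoc]
  simp only [hcons, hadd, hsub]
  refine integral_iSup_le_integral_contraction
    (g := fun i z => f (inner ℝ (w i) z)) (u := fun i z => 2 * K * inner ℝ (w i) z)
    (h := fun z => 2 * max |a| |b| + 2 * (K * ‖z‖)) (fun i => by fun_prop) (fun i => by fun_prop)
    ((integrable_const _).add ((hμ.norm.const_mul _).const_mul _))
    (fun i => abs_inner_add_sum_deviation_le hfm hfab (hw i) v S)
    (fun i z => ?_) (fun i z => ?_) fun i j z => ?_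
  · rw [abs_mul, abs_two]
    exact le_add_of_le_of_nonneg (by linarith [hfM (inner ℝ (w i) z)]) (by positivity)
  · rw [hK]
    exact le_add_of_nonneg_of_le (by positivity) (by
      gcongr
      exact abs_real_inner_le_of_norm_le_one (hw i) z)
  · rw [← mul_sub, ← mul_sub, abs_mul, abs_two, hK]
    gcongr
    exact hf.dist_le_mul _ _

theorem integral_maxDeviation_succ_le (hf : LipschitzWith K f) (hfab : ∀ x, f x ∈ Set.Icc a b)
    (hw : ∀ i, ‖w i‖ ≤ 1) (hμ : Integrable id μ) (v : E) :
    ∫ S : Fin (n + 1) → E, maxDeviation μ f w v S ∂(Measure.pi fun _ => μ) ≤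
      ∫ z, (∫ S : Fin n → E, maxDeviation μ f w (v + (2 * K : ℝ) • z) S ∂(Measure.pi fun _ => μ) +
        ∫ S : Fin n → E, maxDeviation μ f w (v - (2 * K : ℝ) • z) S
          ∂(Measure.pi fun _ => μ)) / 2 ∂μ := by
  have hfm := hf.continuous.measurable
  let ν : Measure (Fin n → E) := Measure.pi fun _ => μ
  have hint {V : E → E} (hVm : Measurable V) (hV : Integrable V μ) :
      Integrable (fun p : E × (Fin n → E) => maxDeviation μ f w (V p.1) p.2) (μ.prod ν) :=
    integrable_maxDeviation_comp hfm hfab hw (hVm.comp measurable_fst) (hV.comp_fst ν)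
      measurable_snd
  have hadd := hint (V := fun z => v + (2 * K : ℝ) • z) (by fun_prop)
    ((integrable_const v).add (hμ.smul (2 * K : ℝ)))
  have hsub := hint (V := fun z => v - (2 * K : ℝ) • z) (by fun_prop)
    ((integrable_const v).sub (hμ.smul (2 * K : ℝ)))
  have hcons : Integrable (fun p : E × (Fin n → E) =>
      maxDeviation μ f w v (Fin.cons p.1 p.2 : Fin (n + 1) → E)) (μ.prod ν) :=
    integrable_maxDeviation_comp hfm hfab hw measurable_const (integrable_const v)
      (measurePreserving_finCons fun _ => μ).measurable
  have hmax : Integrable (maxDeviation μ f w v) (Measure.pi fun _ : Fin (n + 1) => μ) :=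
    integrable_maxDeviation_comp hfm hfab hw measurable_const (integrable_const v) measurable_id
  calc ∫ S, maxDeviation μ f w v S ∂(Measure.pi fun _ : Fin (n + 1) => μ)
      = ∫ S, ∫ z, maxDeviation μ f w v (Fin.cons z S : Fin (n + 1) → E) ∂μ ∂ν := by
        rw [integral_pi_finSucc _ hmax, integral_integral_swap hcons]
    _ ≤ ∫ S, ∫ z, (maxDeviation μ f w (v + (2 * K : ℝ) • z) S +
          maxDeviation μ f w (v - (2 * K : ℝ) • z) S) / 2 ∂μ ∂ν :=
        integral_mono hcons.integral_prod_right ((hadd.add hsub).div_const 2).integral_prod_right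
          fun S => integral_maxDeviation_cons_le hf hfab hw hμ v S
    _ = ∫ z, ∫ S, (maxDeviation μ f w (v + (2 * K : ℝ) • z) S +
          maxDeviation μ f w (v - (2 * K : ℝ) • z) S) / 2 ∂ν ∂μ :=
        (integral_integral_swap ((hadd.add hsub).div_const 2)).symm
    _ = _ := by
        refine integral_congr_ae ?_
        filter_upwards [hadd.prod_right_ae, hsub.prod_right_ae] with z hz_add hz_sub
        rw [integral_div, integral_add hz_add hz_sub]

theorem integral_maxDeviation_le (hf : LipschitzWith K f) (hfab : ∀ x, f x ∈ Set.Icc a b)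
    (hw : ∀ i, ‖w i‖ ≤ 1) (hμ : ∀ᵐ z ∂μ, ‖z‖ ≤ 1) (n : ℕ) (v : E) :
    ∫ S : Fin n → E, maxDeviation μ f w v S ∂(Measure.pi fun _ => μ) ≤
      √(‖v‖ ^ 2 + 4 * K ^ 2 * n) := by
  induction n generalizing v with
  | zero =>
    simp only [maxDeviation, Finset.univ_eq_empty, Finset.sum_empty, add_zero, integral_const,
      probReal_univ, one_smul, Nat.cast_zero, mul_zero, Real.sqrt_sq (norm_nonneg v)]
    exact ciSup_le fun i => (le_abs_self _).trans (abs_real_inner_le_of_norm_le_one (hw i) v)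
  | succ n ih =>
    refine (integral_maxDeviation_succ_le hf hfab hw
      (Integrable.of_bound aestronglyMeasurable_id 1 hμ) v).trans ?_
    have hbound : ∀ᵐ z ∂μ,
        (∫ S : Fin n → E, maxDeviation μ f w (v + (2 * K : ℝ) • z) S ∂(Measure.pi fun _ => μ) +
          ∫ S : Fin n → E, maxDeviation μ f w (v - (2 * K : ℝ) • z) S
            ∂(Measure.pi fun _ => μ)) / 2 ≤ √(‖v‖ ^ 2 + 4 * K ^ 2 * (n + 1 : ℕ)) := by
      filter_upwards [hμ] with z hz
      have hshift : ‖(2 * K : ℝ) • z‖ ≤ 2 * K := by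
        rw [norm_smul, Real.norm_of_nonneg (by positivity)]
        exact mul_le_of_le_one_right (by positivity) hz
      calc _ ≤ (√(‖v + (2 * K : ℝ) • z‖ ^ 2 + 4 * K ^ 2 * n) +
              √(‖v - (2 * K : ℝ) • z‖ ^ 2 + 4 * K ^ 2 * n)) / 2 := by gcongr <;> exact ih _
        _ ≤ √(‖v‖ ^ 2 + ‖(2 * K : ℝ) • z‖ ^ 2 + 4 * K ^ 2 * n) :=
            sqrt_norm_add_sq_add_sqrt_norm_sub_sq_le _ _ (by positivity)
        _ ≤ √(‖v‖ ^ 2 + (2 * K) ^ 2 + 4 * K ^ 2 * n) := by gcongr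
        _ = √(‖v‖ ^ 2 + 4 * K ^ 2 * (n + 1 : ℕ)) := by push_cast; ring_nf
    exact integral_le_of_ae_le (by positivity) hbound

theorem measure_lt_maxDeviation_le (hf : LipschitzWith K f) (hfab : ∀ x, f x ∈ Set.Icc a b)
    (hab : a < b) (hw : ∀ i, ‖w i‖ ≤ 1) (hμ : ∀ᵐ z ∂μ, ‖z‖ ≤ 1) (hn : 1 ≤ n) {δ : ℝ} (hδ : 0 < δ)
    (hδ₁ : δ ≤ 1) :
    (Measure.pi fun _ : Fin n => μ)
      {S | n * (2 * K / √n + (b - a) * √(Real.log (1 / δ) / (2 * n))) < maxDeviation μ f w 0 S} ≤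
      ENNReal.ofReal δ := by
  have hfm := hf.continuous.measurable
  have hmean : ∫ S : Fin n → E, maxDeviation μ f w 0 S ∂(Measure.pi fun _ => μ) ≤
      n * (2 * K / √n) := by
    refine (integral_maxDeviation_le hf hfab hw hμ n 0).trans_eq ?_
    rw [norm_zero, show (0 : ℝ) ^ 2 + 4 * K ^ 2 * n = (2 * K) ^ 2 * n by ring,
      Real.sqrt_mul (by positivity), Real.sqrt_sq (by positivity), mul_div_left_comm,
      Real.div_sqrt]
  refine (measure_mono fun S hS => ?_).trans (measure_lt_le_of_bounded_differences
    (fun _ : Fin n => μ) (F := maxDeviation μ f w 0)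
    (measurable_maxDeviation_comp hfm measurable_const measurable_id) (sub_pos.2 hab)
    (abs_maxDeviation_update_sub_le hfm hfab hw 0) hn hδ hδ₁)
  rw [Set.mem_ofPred_eq, mul_add] at hS
  exact (add_le_add_left hmean _).trans_lt hS

theorem continuous_deviation (hf : Continuous f) (hfab : ∀ x, f x ∈ Set.Icc a b) (z : E) :
    Continuous fun w => deviation μ f w z := by
  refine Continuous.sub ?_ (by fun_prop)
  exact continuous_of_dominated (bound := fun _ => max |a| |b|)
    (fun w => (by fun_prop : Measurable fun z => f (inner ℝ w z)).aestronglyMeasurable)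
    (fun w => ae_of_all _ fun z => abs_le_max_abs_abs (hfab _).1 (hfab _).2) (integrable_const _)
    (ae_of_all _ fun z => by fun_prop)

theorem measure_exists_lt_sum_deviation_le (hf : LipschitzWith K f)
    (hfab : ∀ x, f x ∈ Set.Icc a b) (hab : a < b) (hμ : ∀ᵐ z ∂μ, ‖z‖ ≤ 1) (hn : 1 ≤ n) {δ : ℝ}
    (hδ : 0 < δ) (hδ₁ : δ ≤ 1) :
    (Measure.pi fun _ : Fin n => μ) {S | ∃ w : E, ‖w‖ ≤ 1 ∧
      n * (2 * K / √n + (b - a) * √(Real.log (1 / δ) / (2 * n))) <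
        ∑ r, deviation μ f w (S r)} ≤ ENNReal.ofReal δ := by
  have : Nonempty {w : E // ‖w‖ ≤ 1} := ⟨⟨0, by simp⟩⟩
  let w (i : ℕ) : {w : E // ‖w‖ ≤ 1} := TopologicalSpace.denseSeq _ i
  have hw (i : ℕ) : ‖(w i : E)‖ ≤ 1 := (w i).2
  refine (measure_mono ?_).trans (measure_lt_maxDeviation_le hf hfab hab hw hμ hn hδ hδ₁)
  rintro S ⟨w₀, hw₀, hS⟩
  have hcont : Continuous fun w : {w : E // ‖w‖ ≤ 1} => ∑ r, deviation μ f w (S r) :=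
    continuous_finsetSum _ fun r _ =>
      (continuous_deviation hf.continuous hfab (S r)).comp continuous_subtype_val
  obtain ⟨i, hi⟩ := (TopologicalSpace.denseRange_denseSeq _).exists_mem_open
    (isOpen_lt continuous_const hcont) ⟨⟨w₀, hw₀⟩, hS⟩
  have hle := le_ciSup (bddAbove_range_inner_add_sum_deviation (μ := μ) hf.continuous.measurable
    hfab hw 0 S) i
  rw [inner_zero_right, zero_add] at hle
  exact lt_of_lt_of_le hi hle

theorem measure_exists_lt_abs_integral_sub_average_le (hf : LipschitzWith K f)
    (hfab : ∀ x, f x ∈ Set.Icc a b) (hab : a < b) (hμ : ∀ᵐ z ∂μ, ‖z‖ ≤ 1) (hn : 1 ≤ n) {δ : ℝ}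
    (hδ : 0 < δ) (hδ₁ : δ ≤ 1) :
    (Measure.pi fun _ : Fin n => μ) {S | ∃ w : E, ‖w‖ ≤ 1 ∧
      2 * K / √n + (b - a) * √(Real.log (1 / δ) / (2 * n)) <
        |∫ z, f (inner ℝ w z) ∂μ - (∑ r, f (inner ℝ w (S r))) / n|} ≤
      ENNReal.ofReal (2 * δ) := by
  have hn₀ : (0 : ℝ) < n := by exact_mod_cast hn
  have hupper := measure_exists_lt_sum_deviation_le hf hfab hab hμ hn hδ hδ₁
  have hlower := measure_exists_lt_sum_deviation_le hf.neg
    (fun x => ⟨neg_le_neg (hfab x).2, neg_le_neg (hfab x).1⟩) (neg_lt_neg hab) hμ hn hδ hδ₁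
  have hsum (w : E) (S : Fin n → E) : ∑ r, deviation μ f w (S r) =
      n * (∫ z, f (inner ℝ w z) ∂μ - (∑ r, f (inner ℝ w (S r))) / n) := by
    simp only [deviation, Finset.sum_sub_distrib, Finset.sum_const, Finset.card_univ,
      Fintype.card_fin, nsmul_eq_mul, mul_sub, mul_div_cancel₀ _ hn₀.ne']
  have hsum_neg (w : E) (S : Fin n → E) : ∑ r, deviation μ (fun x => -f x) w (S r) =
      n * -(∫ z, f (inner ℝ w z) ∂μ - (∑ r, f (inner ℝ w (S r))) / n) := by
    rw [mul_neg, ← hsum, ← Finset.sum_neg_distrib]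
    exact Finset.sum_congr rfl fun r _ => by simp only [deviation, integral_neg]; ring
  rw [two_mul δ, ENNReal.ofReal_add hδ.le hδ.le]
  refine (measure_mono ?_).trans ((measure_union_le _ _).trans (add_le_add hupper hlower))
  rintro S ⟨w, hw, hS⟩
  rcases lt_abs.1 hS with h | h
  · exact Or.inl ⟨w, hw, by rw [hsum]; gcongr⟩
  · refine Or.inr ⟨w, hw, ?_⟩
    rw [neg_sub_neg]
    exact (mul_lt_mul_of_pos_left h hn₀).trans_eq (hsum_neg w S).symm

end UniformDeviation

section NormalTail

/-- The upper tail `P(N(0,1) > u)` of the standard normal distribution. -/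
def normalTail (u : ℝ) : ℝ := (gaussianReal 0 1).real (Set.Ioi u)

theorem normalTail_nonneg (u : ℝ) : 0 ≤ normalTail u := measureReal_nonneg

theorem normalTail_le_one (u : ℝ) : normalTail u ≤ 1 := measureReal_le_one

theorem normalTail_neg (u : ℝ) : normalTail (-u) = 1 - normalTail u := by
  have := nullSingletonClass_gaussianReal (μ := 0) (v := 1) one_ne_zero
  have hsymm : (gaussianReal 0 1).real (Set.Iio u) = normalTail (-u) := by
    have hmap := gaussianReal_map_neg (μ := 0) (v := 1)
    rw [neg_zero] at hmap
    rw [normalTail, ← hmap, map_measureReal_apply measurable_neg measurableSet_Ioi]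
    simp [hmap]
  rw [← hsymm, normalTail, ← Set.compl_Iic, probReal_compl_eq_one_sub measurableSet_Iic,
    measureReal_congr Iio_ae_eq_Iic, sub_sub_cancel]

theorem normalTail_le_exp {u : ℝ} (hu : 0 ≤ u) : normalTail u ≤ Real.exp (-(u ^ 2 / 2)) := by
  have hchernoff := measure_ge_le_exp_mul_mgf (μ := gaussianReal 0 1) (X := id) u hu
    (by simpa using integrable_exp_mul_gaussianReal (μ := 0) (v := 1) u)
  refine (measureReal_mono (fun x (hx : u < x) => hx.le)).trans (hchernoff.trans_eq ?_)
  rw [mgf_id_gaussianReal, ← Real.exp_add, NNReal.coe_one]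
  ring_nf

theorem hasDerivAt_normalTail (u : ℝ) : HasDerivAt normalTail (-gaussianPDFReal 0 1 u) u := by
  have hint := integrable_gaussianPDFReal 0 1
  have hcont : Continuous (gaussianPDFReal 0 1) := by
    rw [gaussianPDFReal_def]
    fun_prop
  have hIoi (u : ℝ) : normalTail u = ∫ x in Set.Ioi u, gaussianPDFReal 0 1 x := by
    rw [normalTail, measureReal_def, gaussianReal_apply_eq_integral 0 one_ne_zero,
      ENNReal.toReal_ofReal (integral_nonneg fun x => gaussianPDFReal_nonneg _ _ _)]
  have heq : normalTail = fun u => normalTail 0 - ∫ x in (0 : ℝ)..u, gaussianPDFReal 0 1 x := by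
    ext u
    rw [hIoi, hIoi, eq_sub_iff_add_eq']
    exact intervalIntegral.integral_interval_add_Ioi hint.integrableOn hint.integrableOn
  rw [heq]
  exact (intervalIntegral.integral_hasDerivAt_right hint.intervalIntegrable
    (hcont.stronglyMeasurableAtFilter _ _) hcont.continuousAt).const_sub _

theorem gaussianPDFReal_zero_one_le (u : ℝ) : gaussianPDFReal 0 1 u ≤ Real.exp (-(u ^ 2 / 2)) := by
  have hpi : (√(2 * Real.pi))⁻¹ ≤ 1 :=
    inv_le_one_of_one_le₀ (Real.one_le_sqrt.2 (by linarith [Real.pi_gt_three]))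
  simp only [gaussianPDFReal_def, NNReal.coe_one, sub_zero, mul_one, neg_div]
  exact mul_le_of_le_one_left (Real.exp_pos _).le hpi

theorem map_sum_mul_pi_gaussianReal {ι : Type*} [Fintype ι] {v τ : ℝ≥0} {h : ι → ℝ}
    (hτ : (∑ i, h i ^ 2) * v = τ) :
    (Measure.pi fun _ : ι => gaussianReal 0 v).map (fun b => ∑ i, h i * b i) =
      gaussianReal 0 τ := by
  refine Measure.ext_of_charFun (funext fun t => ?_)
  have hprod (b : ι → ℝ) : Complex.exp (t * (∑ i, h i * b i : ℝ) * Complex.I) =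
      ∏ i, Complex.exp ((t * h i : ℝ) * b i * Complex.I) := by
    rw [← Complex.exp_sum, ← Finset.sum_mul]
    push_cast
    rw [Finset.mul_sum]
    simp only [mul_assoc]
  have hmeas : Measurable fun b : ι → ℝ => ∑ i, h i * b i := by fun_prop
  rw [charFun_apply_real, integral_map hmeas.aemeasurable (by fun_prop)]
  simp only [hprod]
  rw [integral_fintype_prod_eq_prod
    (f := fun i (x : ℝ) => Complex.exp ((t * h i : ℝ) * x * Complex.I))]
  simp only [← charFun_apply_real, charFun_gaussianReal]
  have hτ' : (τ : ℂ) = (∑ i, (h i : ℂ) ^ 2) * v := by exact_mod_cast hτ.symm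
  rw [← Complex.exp_sum, hτ']
  congr 1
  push_cast
  simp only [Finset.sum_mul, Finset.sum_div, mul_zero, zero_mul, zero_sub,
    Finset.sum_neg_distrib]
  exact congrArg Neg.neg (Finset.sum_congr rfl fun i _ => by ring)

theorem gaussianReal_real_Ioi {σ : ℝ≥0} (hσ : σ ≠ 0) (c : ℝ) :
    (gaussianReal 0 (σ ^ 2)).real (Set.Ioi c) = normalTail (c / σ) := by
  have hmap := gaussianReal_map_const_mul (μ := 0) (v := 1) σ
  rw [mul_zero, mul_one] at hmap
  rw [show σ ^ 2 = .mk ((σ : ℝ) ^ 2) (sq_nonneg _) from NNReal.eq rfl, ← hmap,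
    map_measureReal_apply (by fun_prop) measurableSet_Ioi, normalTail]
  congr 1
  ext x
  exact (div_lt_iff₀' (NNReal.coe_pos.2 (pos_of_ne_zero hσ))).symm

end NormalTail

section MarginThreshold

/-- The exponential weight controlling the conditional tail `normalTail (marginThreshold k γ h a α)`
in terms of `A = ‖a‖`. The first term is the bound for a typical column `a`; the other two are at
least one when `A` is atypically small, respectively atypically large. -/
def tailWeight (k : ℕ) (γ A : ℝ) : ℝ :=
  Real.exp (-(k * γ ^ 2 / 3200)) + Real.exp (4 / 25 * k) * Real.exp (-1 / 4 * k * A ^ 2) +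
    Real.exp (-k) * Real.exp (3 / 8 * k * A ^ 2)

theorem four_add_mul_le_tailWeight {k : ℕ} (hk : 1 ≤ k) {γ A y : ℝ} (hA : 0 ≤ A) (hy₀ : 0 ≤ y)
    (hy₁ : y ≤ 1) (hy : 4 / 5 ≤ A → A ≤ 2 → y ≤ Real.exp (-(k * γ ^ 2 / 3200))) :
    (4 + A) * y ≤ 6 * tailWeight k γ A := by
  have hk' : (1 : ℝ) ≤ k := by exact_mod_cast hk
  have htyp := Real.exp_pos (-(k * γ ^ 2 / 3200))
  have hsmall : 0 < Real.exp (4 / 25 * k + -1 / 4 * k * A ^ 2) := Real.exp_pos _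
  have hlarge : 0 < Real.exp (-k + 3 / 8 * k * A ^ 2) := Real.exp_pos _
  rw [tailWeight, ← Real.exp_add, ← Real.exp_add]
  rcases lt_or_ge A (4 / 5) with hA' | hA'
  · have hA2 : A ^ 2 ≤ 16 / 25 := by nlinarith
    have : (1 : ℝ) ≤ Real.exp (4 / 25 * k + -1 / 4 * k * A ^ 2) := Real.one_le_exp (by nlinarith)
    nlinarith
  rcases lt_or_ge 2 A with hA'' | hA''
  · have hA2 : 4 ≤ A ^ 2 := by nlinarith
    have : 3 / 8 * A ^ 2 ≤ Real.exp (-k + 3 / 8 * k * A ^ 2) :=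
      le_trans (by nlinarith) (Real.add_one_le_exp _)
    nlinarith
  · nlinarith [hy hA' hA'']

/-- The number `u` for which, if `g` is a Gaussian vector with independent `N(0, 1/k)` coordinates,
`⟪h, α • a + √(1 - α²) • g⟫` exceeds `γ / 2` with probability `normalTail u`. -/
def marginThreshold {F : Type*} [NormedAddCommGroup F] [InnerProductSpace ℝ F]
    (k : ℕ) (γ : ℝ) (h a : F) (α : ℝ) : ℝ :=
  √k * (γ / 2 - α * inner ℝ h a) / (√(1 - α ^ 2) * ‖h‖)

variable {F : Type*} [NormedAddCommGroup F] [InnerProductSpace ℝ F] {h a : F} {k : ℕ}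
  {γ α β : ℝ} {s : Set ℝ}

theorem hasDerivAt_marginThreshold (hh : h ≠ 0) (hα : α ^ 2 < 1) :
    HasDerivAt (marginThreshold k γ h a)
      (√k * (α * γ / 2 - inner ℝ h a) / (√(1 - α ^ 2) ^ 3 * ‖h‖)) α := by
  have hh' : ‖h‖ ≠ 0 := norm_ne_zero_iff.2 hh
  have hpos : 0 < 1 - α ^ 2 := by linarith
  have hr : √(1 - α ^ 2) ≠ 0 := (Real.sqrt_pos.2 hpos).ne'
  have hr2 : √(1 - α ^ 2) ^ 2 = 1 - α ^ 2 := Real.sq_sqrt hpos.le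
  have hnum : HasDerivAt (fun α => √k * (γ / 2 - α * inner ℝ h a)) (√k * -(1 * inner ℝ h a)) α :=
    (((hasDerivAt_id α).mul_const _).const_sub _).const_mul _
  have hden : HasDerivAt (fun α => √(1 - α ^ 2) * ‖h‖)
      (-(2 * α) / (2 * √(1 - α ^ 2)) * ‖h‖) α := by
    simpa using (((hasDerivAt_pow 2 α).const_sub 1).sqrt hpos.ne').mul_const ‖h‖
  refine (hnum.div hden (mul_ne_zero hr hh')).congr_deriv ?_
  field_simp
  rw [hr2]
  ring

theorem le_inner_of_norm_sub_le (hha : ‖h - a‖ ≤ 1 / 10) (ha : 4 / 5 ≤ ‖a‖) :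
    14 / 25 ≤ inner ℝ h a := by
  have hsub := abs_le.1 (abs_real_inner_le_norm (h - a) a)
  rw [inner_sub_left, real_inner_self_eq_norm_sq] at hsub
  nlinarith [norm_nonneg a]

theorem marginThreshold_nonneg (hha : ‖h - a‖ ≤ 1 / 10) (ha : 4 / 5 ≤ ‖a‖) (hγ : 0 ≤ γ)
    (hα : α ≤ 0) : 0 ≤ marginThreshold k γ h a α := by
  have := le_inner_of_norm_sub_le hha ha
  have : 0 ≤ γ / 2 - α * inner ℝ h a := by nlinarith
  unfold marginThreshold
  positivity

theorem marginThreshold_nonpos (hha : ‖h - a‖ ≤ 1 / 10) (ha : 4 / 5 ≤ ‖a‖) (hγ : 0 ≤ γ)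
    (hα : γ ≤ α) : marginThreshold k γ h a α ≤ 0 := by
  have := le_inner_of_norm_sub_le hha ha
  exact div_nonpos_of_nonpos_of_nonneg
    (mul_nonpos_of_nonneg_of_nonpos (Real.sqrt_nonneg _) (by nlinarith)) (by positivity)

theorem le_abs_marginThreshold (hha : ‖h - a‖ ≤ 1 / 10) (hh : h ≠ 0) (ha : 4 / 5 ≤ ‖a‖)
    (ha' : ‖a‖ ≤ 2) (hγ : 0 ≤ γ) (hα : α ∈ Set.Icc (-1 / 2) 0 ∪ Set.Icc γ (1 / 2)) :
    √k * γ / 40 ≤ |marginThreshold k γ h a α| := by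
  have hs : 0 < ‖h‖ := norm_pos_iff.2 hh
  have hs' : ‖h‖ ≤ 21 / 10 := by linarith [norm_le_norm_add_norm_sub' h a]
  have hinner := le_inner_of_norm_sub_le hha ha
  have hα2 : α ^ 2 ≤ 1 / 4 := by rcases hα with hα | hα <;> nlinarith [hα.1, hα.2]
  have hr : 0 < √(1 - α ^ 2) := Real.sqrt_pos.2 (by linarith)
  have hr1 : √(1 - α ^ 2) ≤ 1 := Real.sqrt_le_one.2 (by nlinarith)
  have hnum : 3 / 50 * γ ≤ |γ / 2 - α * inner ℝ h a| := by
    rcases hα with hα | hα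
    · exact le_abs.2 (.inl (by nlinarith [hα.1, hα.2]))
    · exact le_abs.2 (.inr (by nlinarith [hα.1, hα.2]))
  have hden : √(1 - α ^ 2) * ‖h‖ ≤ 21 / 10 := by nlinarith
  rw [marginThreshold, abs_div, abs_mul, abs_of_nonneg (Real.sqrt_nonneg _),
    abs_of_pos (mul_pos hr hs), le_div_iff₀ (mul_pos hr hs)]
  calc √k * γ / 40 * (√(1 - α ^ 2) * ‖h‖) ≤ √k * γ / 40 * (21 / 10) := by gcongr
    _ ≤ √k * (3 / 50 * γ) := by nlinarith [mul_nonneg (Real.sqrt_nonneg k) hγ]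
    _ ≤ √k * |γ / 2 - α * inner ℝ h a| := by gcongr

theorem exp_neg_sq_marginThreshold_le (hha : ‖h - a‖ ≤ 1 / 10) (hh : h ≠ 0) (ha : 4 / 5 ≤ ‖a‖)
    (ha' : ‖a‖ ≤ 2) (hγ : 0 ≤ γ) (hα : α ∈ Set.Icc (-1 / 2) 0 ∪ Set.Icc γ (1 / 2)) :
    Real.exp (-(marginThreshold k γ h a α ^ 2 / 2)) ≤ Real.exp (-(k * γ ^ 2 / 3200)) := by
  have hsq := pow_le_pow_left₀ (by positivity) (le_abs_marginThreshold hha hh ha ha' hγ hα) 2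
    (a := √k * γ / 40)
  rw [sq_abs, div_pow, mul_pow, Real.sq_sqrt k.cast_nonneg] at hsq
  exact Real.exp_le_exp.2 (by linarith)

theorem normalTail_marginThreshold_le (hk : 1 ≤ k) (hha : ‖h - a‖ ≤ 1 / 10) (hh : h ≠ 0)
    (hγ : 0 ≤ γ) (hα : α ∈ Set.Icc (-1 / 2) 0) :
    normalTail (marginThreshold k γ h a α) ≤ 3 / 2 * tailWeight k γ ‖a‖ := by
  have := four_add_mul_le_tailWeight hk (γ := γ) (norm_nonneg a) (normalTail_nonneg _)
    (normalTail_le_one _) fun ha ha' => (normalTail_le_exp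
      (marginThreshold_nonneg hha ha hγ hα.2)).trans
      (exp_neg_sq_marginThreshold_le hha hh ha ha' hγ (.inl hα))
  nlinarith [norm_nonneg a, normalTail_nonneg (marginThreshold k γ h a α)]

theorem one_sub_normalTail_marginThreshold_le (hk : 1 ≤ k) (hha : ‖h - a‖ ≤ 1 / 10) (hh : h ≠ 0)
    (hγ : 0 ≤ γ) (hα : α ∈ Set.Icc γ (1 / 2)) :
    1 - normalTail (marginThreshold k γ h a α) ≤ 3 / 2 * tailWeight k γ ‖a‖ := by
  rw [← normalTail_neg]
  have := four_add_mul_le_tailWeight hk (γ := γ) (norm_nonneg a) (normalTail_nonneg _)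
    (normalTail_le_one _) fun ha ha' => (normalTail_le_exp (neg_nonneg.2
      (marginThreshold_nonpos hha ha hγ hα.1))).trans (by
        rw [neg_sq]
        exact exp_neg_sq_marginThreshold_le hha hh ha ha' hγ (.inr hα))
  nlinarith [norm_nonneg a, normalTail_nonneg (-marginThreshold k γ h a α)]

theorem abs_deriv_marginThreshold_le (hh : 1 / 20 ≤ ‖h‖)
    (hγ : γ ∈ Set.Icc 0 1) (hα : |α| ≤ 1 / 2) :
    |√k * (α * γ / 2 - inner ℝ h a) / (√(1 - α ^ 2) ^ 3 * ‖h‖)| ≤ 2 * √k * (4 + ‖a‖) := by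
  have hα2 : α ^ 2 ≤ 1 / 4 := by nlinarith [sq_abs α, abs_nonneg α]
  have hr : 43 / 50 ≤ √(1 - α ^ 2) := Real.le_sqrt_of_sq_le (by nlinarith)
  have hr3 : 5 / 8 ≤ √(1 - α ^ 2) ^ 3 :=
    le_trans (by norm_num) (pow_le_pow_left₀ (by norm_num) hr 3)
  have hnum : |α * γ / 2 - inner ℝ h a| ≤ 1 / 4 + ‖h‖ * ‖a‖ := by
    refine (abs_sub _ _).trans (add_le_add ?_ (abs_real_inner_le_norm h a))
    rw [abs_div, abs_mul, abs_of_nonneg hγ.1, abs_two]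
    nlinarith [hγ.1, hγ.2, abs_nonneg α]
  rw [abs_div, abs_mul, abs_of_nonneg (Real.sqrt_nonneg _),
    abs_of_pos (a := _ * ‖h‖) (by positivity), div_le_iff₀ (by positivity)]
  calc √k * |α * γ / 2 - inner ℝ h a| ≤ √k * (1 / 4 + ‖h‖ * ‖a‖) := by gcongr
    _ ≤ √k * (2 * (4 + ‖a‖) * (5 / 8 * ‖h‖)) := by
      gcongr
      nlinarith [norm_nonneg a, mul_nonneg (norm_nonneg h) (norm_nonneg a)]
    _ ≤ √k * (2 * (4 + ‖a‖) * (√(1 - α ^ 2) ^ 3 * ‖h‖)) := by gcongr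
    _ = 2 * √k * (4 + ‖a‖) * (√(1 - α ^ 2) ^ 3 * ‖h‖) := by ring

theorem abs_normalTail_marginThreshold_sub_le (hk : 1 ≤ k) (hha : ‖h - a‖ ≤ 1 / 10)
    (hh : 1 / 20 ≤ ‖h‖) (hγ : γ ∈ Set.Icc 0 1) (hs : Convex ℝ s)
    (hsγ : s ⊆ Set.Icc (-1 / 2) 0 ∪ Set.Icc γ (1 / 2)) (hα : α ∈ s) (hβ : β ∈ s) :
    |normalTail (marginThreshold k γ h a β) - normalTail (marginThreshold k γ h a α)| ≤
      12 * √k * tailWeight k γ ‖a‖ * |β - α| := by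
  have hh0 : h ≠ 0 := norm_pos_iff.1 (by linarith)
  have habs {x : ℝ} (hx : x ∈ s) : |x| ≤ 1 / 2 :=
    abs_le.2 (by rcases hsγ hx with hx | hx <;> constructor <;> linarith [hx.1, hx.2, hγ.1])
  refine hs.norm_image_sub_le_of_norm_hasDerivWithin_le (fun x hx =>
    ((hasDerivAt_normalTail _).comp x (hasDerivAt_marginThreshold hh0
      (by nlinarith [sq_abs x, habs hx, abs_nonneg x]))).hasDerivWithinAt) (fun x hx => ?_) hα hβ
  set u := marginThreshold k γ h a x
  have hpdf : (4 + ‖a‖) * gaussianPDFReal 0 1 u ≤ 6 * tailWeight k γ ‖a‖ :=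
    have hle := gaussianPDFReal_zero_one_le u
    four_add_mul_le_tailWeight hk (norm_nonneg a) (gaussianPDFReal_nonneg _ _ _)
      (hle.trans (Real.exp_le_one_iff.2 (neg_nonpos.2 (by positivity))))
      fun ha ha' => hle.trans (exp_neg_sq_marginThreshold_le hha hh0 ha ha' hγ.1 (hsγ hx))
  rw [norm_mul, norm_neg, Real.norm_of_nonneg (gaussianPDFReal_nonneg _ _ _), Real.norm_eq_abs]
  calc gaussianPDFReal 0 1 u * |√k * (x * γ / 2 - inner ℝ h a) / (√(1 - x ^ 2) ^ 3 * ‖h‖)|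
      ≤ gaussianPDFReal 0 1 u * (2 * √k * (4 + ‖a‖)) :=
        mul_le_mul_of_nonneg_left (abs_deriv_marginThreshold_le hh hγ (habs hx))
          (gaussianPDFReal_nonneg _ _ _)
    _ = 2 * √k * ((4 + ‖a‖) * gaussianPDFReal 0 1 u) := by ring
    _ ≤ 2 * √k * (6 * tailWeight k γ ‖a‖) := by gcongr
    _ = 12 * √k * tailWeight k γ ‖a‖ := by ring

end MarginThreshold

section GaussianColumn

/-- The law of a column of the random matrix `A`: a vector of `k` independent `N(0, 1/k)`
coordinates. -/
def gaussianColumn (k : ℕ) : Measure (Fin k → ℝ) :=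
  Measure.pi fun _ => gaussianReal 0 (k : ℝ≥0)⁻¹

instance isProbabilityMeasure_gaussianColumn (k : ℕ) :
    IsProbabilityMeasure (gaussianColumn k) := by
  unfold gaussianColumn
  infer_instance

variable {k : ℕ} {η : ℝ}

theorem gaussianColumn_real_lt_inner (hk : k ≠ 0) {h : EuclideanSpace ℝ (Fin k)} {β : ℝ}
    (hβ : 0 < β) (hh : h ≠ 0) (c : ℝ) :
    (gaussianColumn k).real {b | c < β * inner ℝ h (WithLp.toLp 2 b)} =
      normalTail (√k * c / (β * ‖h‖)) := by
  set σ : ℝ≥0 := β.toNNReal * ‖h‖₊ / NNReal.sqrt k with hσ_def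
  have hσ : (σ : ℝ) = β * ‖h‖ / √k := by simp [hσ_def, hβ.le]
  have hσ0 : σ ≠ 0 := by simp [hσ_def, hβ, hh, hk]
  have hvar : (∑ i, (β * h i) ^ 2) * ((k : ℝ≥0)⁻¹ : ℝ≥0) = (σ ^ 2 : ℝ≥0) := by
    simp only [mul_pow, ← Finset.mul_sum, ← EuclideanSpace.real_norm_sq_eq]
    rw [NNReal.coe_pow, hσ, div_pow, Real.sq_sqrt k.cast_nonneg, mul_pow, NNReal.coe_inv,
      NNReal.coe_natCast, div_eq_mul_inv]
  have hset : {b | c < β * inner ℝ h (WithLp.toLp 2 b)} =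
      (fun b => ∑ i, β * h i * b i) ⁻¹' Set.Ioi c := by
    ext b
    simp [PiLp.inner_apply, Finset.mul_sum, mul_left_comm, mul_comm]
  rw [hset, ← map_measureReal_apply (by fun_prop) measurableSet_Ioi, gaussianColumn,
    map_sum_mul_pi_gaussianReal hvar, gaussianReal_real_Ioi hσ0, hσ, div_div_eq_mul_div,
    mul_comm c]

theorem integral_exp_mul_sq_gaussianReal (hk : k ≠ 0) (hη : η < 1 / 2) :
    ∫ x, Real.exp (η * k * x ^ 2) ∂(gaussianReal 0 (k : ℝ≥0)⁻¹) = (√(1 - 2 * η))⁻¹ := by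
  have : (0 : ℝ) < k := by positivity
  have : 1 - 2 * η ≠ 0 := by linarith
  have : 1 / 2 - η ≠ 0 := by linarith
  have hdensity (x : ℝ) : gaussianPDFReal 0 (k : ℝ≥0)⁻¹ x • Real.exp (η * k * x ^ 2) =
      (√(2 * Real.pi / k))⁻¹ * Real.exp (-(k * (1 / 2 - η)) * x ^ 2) := by
    rw [gaussianPDFReal_def, smul_eq_mul, mul_assoc, ← Real.exp_add]
    push_cast
    rw [← div_eq_mul_inv]
    congr 2
    field_simp
    ring
  rw [integral_gaussianReal_eq_integral_smul (by positivity)]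
  simp only [hdensity]
  rw [integral_const_mul, integral_gaussian, ← Real.sqrt_inv, ← Real.sqrt_inv,
    ← Real.sqrt_mul (by positivity)]
  congr 1
  field_simp

theorem integral_exp_mul_norm_sq_gaussianColumn (hk : k ≠ 0) (hη : η < 1 / 2) :
    ∫ a, Real.exp (η * k * ‖WithLp.toLp 2 a‖ ^ 2) ∂gaussianColumn k = (√(1 - 2 * η))⁻¹ ^ k := by
  simp only [EuclideanSpace.real_norm_sq_eq, Finset.mul_sum, Real.exp_sum]
  rw [gaussianColumn, integral_fintype_prod_eq_prod (f := fun _ x => Real.exp (η * k * x ^ 2))]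
  simp [integral_exp_mul_sq_gaussianReal hk hη]

theorem integrable_exp_mul_norm_sq_gaussianColumn (hk : k ≠ 0) (hη : η < 1 / 2) :
    Integrable (fun a => Real.exp (η * k * ‖WithLp.toLp 2 a‖ ^ 2)) (gaussianColumn k) := by
  refine Integrable.of_integral_ne_zero ?_
  rw [integral_exp_mul_norm_sq_gaussianColumn hk hη]
  have : 0 < 1 - 2 * η := by linarith
  positivity

theorem integrable_tailWeight_norm (hk : k ≠ 0) (γ : ℝ) :
    Integrable (fun a => tailWeight k γ ‖WithLp.toLp 2 a‖) (gaussianColumn k) :=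
  ((integrable_const _).add ((integrable_exp_mul_norm_sq_gaussianColumn hk
    (by norm_num)).const_mul _)).add ((integrable_exp_mul_norm_sq_gaussianColumn hk
    (by norm_num)).const_mul _)

theorem inv_sqrt_three_halves_le : (√(1 - 2 * (-1 / 4)))⁻¹ ≤ Real.exp (-(9 / 50)) := by
  have hexp : Real.exp (9 / 50) ≤ 1 / (1 - 9 / 50) :=
    Real.exp_bound_div_one_sub_of_interval (by norm_num) (by norm_num)
  rw [Real.exp_neg]
  refine inv_anti₀ (Real.exp_pos _) (Real.le_sqrt_of_sq_le ?_)
  exact (pow_le_pow_left₀ (Real.exp_pos _).le hexp 2).trans (by norm_num)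

theorem inv_sqrt_one_quarter_le : (√(1 - 2 * (3 / 8)))⁻¹ ≤ Real.exp (49 / 50) := by
  have hsqrt : √(1 - 2 * (3 / 8)) = 1 / 2 := by
    rw [Real.sqrt_eq_iff_mul_self_eq] <;> norm_num
  rw [hsqrt, show (49 / 50 : ℝ) = 49 / 100 + 49 / 100 by norm_num, Real.exp_add]
  nlinarith [Real.add_one_le_exp (49 / 100 : ℝ)]

theorem integral_tailWeight_norm_le (hk : k ≠ 0) {γ : ℝ} (hγ : γ ^ 2 ≤ 1) :
    ∫ a, tailWeight k γ ‖WithLp.toLp 2 a‖ ∂gaussianColumn k ≤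
      3 * Real.exp (-(k * γ ^ 2 / 3200)) := by
  have hpow {b c x : ℝ} (hbc : b + c ≤ -1 / 50) (hx₀ : 0 ≤ x) (hx : x ≤ Real.exp c) :
      Real.exp (b * k) * x ^ k ≤ Real.exp (-(k * γ ^ 2 / 3200)) := by
    calc Real.exp (b * k) * x ^ k ≤ Real.exp (b * k) * Real.exp c ^ k := by gcongr
      _ = Real.exp (k * (b + c)) := by rw [← Real.exp_nat_mul, ← Real.exp_add]; ring_nf
      _ ≤ Real.exp (-(k * γ ^ 2 / 3200)) :=
        Real.exp_le_exp.2 (by nlinarith [k.cast_nonneg (α := ℝ)])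
  have hint {η : ℝ} (hη : η < 1 / 2) (c : ℝ) := (integrable_exp_mul_norm_sq_gaussianColumn hk
    hη).const_mul c
  have hsmall := hpow (b := 4 / 25) (by norm_num) (by positivity) inv_sqrt_three_halves_le
  have hlarge := hpow (b := -1) (by norm_num) (by positivity) inv_sqrt_one_quarter_le
  rw [neg_one_mul] at hlarge
  have hsplit : ∫ a, tailWeight k γ ‖WithLp.toLp 2 a‖ ∂gaussianColumn k =
      Real.exp (-(k * γ ^ 2 / 3200)) + Real.exp (4 / 25 * k) * (√(1 - 2 * (-1 / 4)))⁻¹ ^ k +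
        Real.exp (-k) * (√(1 - 2 * (3 / 8)))⁻¹ ^ k := by
    simp only [tailWeight]
    rw [integral_add, integral_add, integral_const_mul, integral_const_mul,
      integral_exp_mul_norm_sq_gaussianColumn hk (by norm_num),
      integral_exp_mul_norm_sq_gaussianColumn hk (by norm_num), integral_const,
      probReal_univ, one_smul]
    · exact integrable_const _
    · exact hint (by norm_num) _
    · exact (integrable_const _).add (hint (by norm_num) _)
    · exact hint (by norm_num) _
  linarith

end GaussianColumn

section Rounding

variable {k : ℕ}

theorem gridStep_pos (hk : k ≠ 0) : 0 < gridStep k := by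
  unfold gridStep
  positivity

theorem natCast_mul_gridStep_sq (hk : k ≠ 0) : k * gridStep k ^ 2 = 1 / 100 := by
  rw [gridStep, inv_pow, mul_pow, Real.sq_sqrt k.cast_nonneg]
  field_simp
  norm_num

/-- The randomized rounding of a vector `a` to the grid, with the thresholds `t`. -/
def vecRound (k : ℕ) (a t : Fin k → ℝ) : EuclideanSpace ℝ (Fin k) :=
  WithLp.toLp 2 fun i =>
    if t i ≤ roundProb k (a i) then roundDown k (a i) else roundDown k (a i) + gridStep k

theorem measurable_roundDown (k : ℕ) : Measurable (roundDown k) := by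
  unfold roundDown
  fun_prop

theorem measurable_vecRound (k : ℕ) :
    Measurable fun p : (Fin k → ℝ) × (Fin k → ℝ) => vecRound k p.1 p.2 := by
  have := measurable_roundDown k
  unfold vecRound roundProb
  refine (WithLp.measurable_toLp 2 _).comp (measurable_pi_lambda _ fun i => ?_)
  exact Measurable.ite (measurableSet_le (by fun_prop) (by fun_prop)) (by fun_prop) (by fun_prop)

theorem abs_vecRound_sub_le (hk : k ≠ 0) (a t : Fin k → ℝ) (i : Fin k) :
    |vecRound k a t i - a i| ≤ gridStep k := by
  have hg := gridStep_pos hk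
  have h1 := Int.floor_le ((a i - gridStep k / 2) / gridStep k)
  have h2 := Int.lt_floor_add_one ((a i - gridStep k / 2) / gridStep k)
  rw [le_div_iff₀ hg] at h1
  rw [div_lt_iff₀ hg] at h2
  simp only [vecRound, roundDown]
  split_ifs <;> rw [abs_le] <;> constructor <;> linarith

theorem half_gridStep_le_abs_vecRound (hk : k ≠ 0) (a t : Fin k → ℝ) (i : Fin k) :
    gridStep k / 2 ≤ |vecRound k a t i| := by
  have hg := gridStep_pos hk
  have hgrid (z : ℤ) : gridStep k / 2 ≤ |gridStep k / 2 + z * gridStep k| := by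
    rcases le_or_gt 0 z with hz | hz
    · have : (0 : ℝ) ≤ z := by exact_mod_cast hz
      exact le_abs.2 (.inl (by nlinarith))
    · have : (z : ℝ) ≤ -1 := by exact_mod_cast Int.le_sub_one_of_lt hz
      exact le_abs.2 (.inr (by nlinarith))
  simp only [vecRound, roundDown]
  split_ifs
  · exact hgrid _
  · have := hgrid (⌊(a i - gridStep k / 2) / gridStep k⌋ + 1)
    rwa [Int.cast_add, Int.cast_one, add_one_mul, ← add_assoc] at this

theorem norm_vecRound_sub_le (hk : k ≠ 0) (a t : Fin k → ℝ) :
    ‖vecRound k a t - WithLp.toLp 2 a‖ ≤ 1 / 10 := by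
  have hsum : ∑ i, (vecRound k a t i - a i) ^ 2 ≤ ∑ _i : Fin k, gridStep k ^ 2 :=
    Finset.sum_le_sum fun i _ =>
      sq_le_sq.2 ((abs_vecRound_sub_le hk a t i).trans (le_abs_self _))
  rw [Finset.sum_const, Finset.card_fin, nsmul_eq_mul, natCast_mul_gridStep_sq hk] at hsum
  refine (sq_le_sq₀ (norm_nonneg _) (by norm_num)).1 ?_
  rw [EuclideanSpace.real_norm_sq_eq]
  exact hsum.trans (by norm_num)

theorem one_div_twenty_le_norm_vecRound (hk : k ≠ 0) (a t : Fin k → ℝ) :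
    1 / 20 ≤ ‖vecRound k a t‖ := by
  have hsum : ∑ _i : Fin k, (gridStep k / 2) ^ 2 ≤ ∑ i, vecRound k a t i ^ 2 :=
    Finset.sum_le_sum fun i _ => sq_le_sq.2 <|
      (abs_of_pos (half_pos (gridStep_pos hk))).trans_le (half_gridStep_le_abs_vecRound hk a t i)
  rw [Finset.sum_const, Finset.card_fin, nsmul_eq_mul, div_pow, ← mul_div_assoc,
    natCast_mul_gridStep_sq hk] at hsum
  refine (sq_le_sq₀ (by norm_num) (norm_nonneg _)).1 ?_
  rw [EuclideanSpace.real_norm_sq_eq]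
  exact hsum.trans' (by norm_num)

theorem vecRound_ne_zero (hk : k ≠ 0) (a t : Fin k → ℝ) : vecRound k a t ≠ 0 :=
  norm_pos_iff.1 <| (one_div_twenty_le_norm_vecRound hk a t).trans_lt' (by norm_num)

end Rounding

section MarginTail

instance isProbabilityMeasure_restrict_Icc :
    IsProbabilityMeasure (volume.restrict (Set.Icc (0 : ℝ) 1)) := ⟨by simp⟩

/-- The joint law of a column of the random matrix and of the rounding thresholds. -/
def columnLaw (k : ℕ) : Measure ((Fin k → ℝ) × (Fin k → ℝ)) :=
  (gaussianColumn k).prod (Measure.pi fun _ => volume.restrict (Set.Icc (0 : ℝ) 1))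

instance isProbabilityMeasure_columnLaw (k : ℕ) : IsProbabilityMeasure (columnLaw k) := by
  unfold columnLaw
  infer_instance

/-- The conditional probability, given the column `p.1` of the random matrix on which `w` lives and
the rounding thresholds `p.2`, that the rounded margin exceeds `γ / 2` when the true margin is
`α`. -/
def condTail (k : ℕ) (γ α : ℝ) (p : (Fin k → ℝ) × (Fin k → ℝ)) : ℝ :=
  normalTail (marginThreshold k γ (vecRound k p.1 p.2) (WithLp.toLp 2 p.1) α)

/-- The probability that the rounded margin exceeds `γ / 2` when the true margin is `α`. -/
def marginTail (k : ℕ) (γ α : ℝ) : ℝ := ∫ p, condTail k γ α p ∂columnLaw k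

variable {k : ℕ} {γ α β : ℝ}

theorem measurable_condTail (k : ℕ) (γ α : ℝ) : Measurable (condTail k γ α) := by
  have := measurable_vecRound k
  have hcont : Continuous normalTail :=
    continuous_iff_continuousAt.2 fun u => (hasDerivAt_normalTail u).continuousAt
  have := hcont.measurable
  have := (WithLp.measurable_toLp 2 (Fin k → ℝ))
  unfold condTail marginThreshold
  fun_prop

theorem integrable_condTail (k : ℕ) (γ α : ℝ) : Integrable (condTail k γ α) (columnLaw k) :=
  .of_bound (measurable_condTail k γ α).aestronglyMeasurable 1 <| .of_forall fun p => by
    rw [condTail, Real.norm_of_nonneg (normalTail_nonneg _)]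
    exact normalTail_le_one _

theorem marginTail_nonneg (k : ℕ) (γ α : ℝ) : 0 ≤ marginTail k γ α :=
  integral_nonneg fun _ => normalTail_nonneg _

theorem one_sub_marginTail (k : ℕ) (γ α : ℝ) :
    1 - marginTail k γ α = ∫ p, (1 - condTail k γ α p) ∂columnLaw k := by
  rw [integral_sub (integrable_const 1) (integrable_condTail k γ α), marginTail]
  simp

theorem marginTail_le_one (k : ℕ) (γ α : ℝ) : marginTail k γ α ≤ 1 := by
  rw [← sub_nonneg, one_sub_marginTail]
  exact integral_nonneg fun _ => sub_nonneg.2 (normalTail_le_one _)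

theorem norm_integral_columnLaw_le (hk : k ≠ 0) (hγ : γ ^ 2 ≤ 1) {b : ℝ}
    {f : (Fin k → ℝ) × (Fin k → ℝ) → ℝ} (hb : 0 ≤ b)
    (hf : ∀ p, ‖f p‖ ≤ b * tailWeight k γ ‖WithLp.toLp 2 p.1‖) :
    ‖∫ p, f p ∂columnLaw k‖ ≤ 3 * b * Real.exp (-(k * γ ^ 2 / 3200)) := by
  have hint := (integrable_tailWeight_norm hk γ).const_mul b
  calc ‖∫ p, f p ∂columnLaw k‖
      ≤ ∫ p, b * tailWeight k γ ‖WithLp.toLp 2 p.1‖ ∂columnLaw k :=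
        norm_integral_le_of_norm_le (hint.comp_fst _) (.of_forall hf)
    _ = b * ∫ a, tailWeight k γ ‖WithLp.toLp 2 a‖ ∂gaussianColumn k := by
      rw [columnLaw, integral_fun_fst (fun a => b * tailWeight k γ ‖WithLp.toLp 2 a‖),
        integral_const_mul]
      simp
    _ ≤ b * (3 * Real.exp (-(k * γ ^ 2 / 3200))) := by
      gcongr
      exact integral_tailWeight_norm_le hk hγ
    _ = 3 * b * Real.exp (-(k * γ ^ 2 / 3200)) := by ring

theorem abs_marginTail_sub_le (hk : 1 ≤ k) (hγ : γ ∈ Set.Icc 0 1) {s : Set ℝ} (hs : Convex ℝ s)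
    (hsγ : s ⊆ Set.Icc (-1 / 2) 0 ∪ Set.Icc γ (1 / 2)) (hα : α ∈ s) (hβ : β ∈ s) :
    |marginTail k γ β - marginTail k γ α| ≤
      36 * √k * Real.exp (-(k * γ ^ 2 / 3200)) * |β - α| := by
  rw [marginTail, marginTail, ← integral_sub (integrable_condTail k γ β)
    (integrable_condTail k γ α)]
  refine (norm_integral_columnLaw_le (by omega) (by nlinarith [hγ.1, hγ.2])
    (b := 12 * √k * |β - α|) (by positivity) fun p => ?_).trans_eq (by ring)
  exact (abs_normalTail_marginThreshold_sub_le hk (norm_vecRound_sub_le (by omega) _ _)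
    (one_div_twenty_le_norm_vecRound (by omega) _ _) hγ hs hsγ hα hβ).trans_eq (by ring)

theorem marginTail_le (hk : 1 ≤ k) (hγ : γ ∈ Set.Icc 0 1) (hα : α ∈ Set.Icc (-1 / 2) 0) :
    marginTail k γ α ≤ 9 / 2 * Real.exp (-(k * γ ^ 2 / 3200)) := by
  refine (le_abs_self _).trans <| (norm_integral_columnLaw_le (by omega)
    (by nlinarith [hγ.1, hγ.2]) (b := 3 / 2) (by norm_num) fun p => ?_).trans_eq (by ring)
  rw [condTail, Real.norm_of_nonneg (normalTail_nonneg _)]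
  exact normalTail_marginThreshold_le hk (norm_vecRound_sub_le (by omega) _ _)
    (vecRound_ne_zero (by omega) _ _) hγ.1 hα

theorem one_sub_marginTail_le (hk : 1 ≤ k) (hγ : γ ∈ Set.Icc 0 1) (hα : α ∈ Set.Icc γ (1 / 2)) :
    1 - marginTail k γ α ≤ 9 / 2 * Real.exp (-(k * γ ^ 2 / 3200)) := by
  rw [one_sub_marginTail]
  refine (le_abs_self _).trans <| (norm_integral_columnLaw_le (by omega)
    (by nlinarith [hγ.1, hγ.2]) (b := 3 / 2) (by norm_num) fun p => ?_).trans_eq (by ring)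
  rw [condTail, Real.norm_of_nonneg (sub_nonneg.2 (normalTail_le_one _))]
  exact one_sub_normalTail_marginThreshold_le hk (norm_vecRound_sub_le (by omega) _ _)
    (vecRound_ne_zero (by omega) _ _) hγ.1 hα

end MarginTail

section RoundedMargin

variable {d k : ℕ} {γ α c : ℝ}

theorem map_two_columns {m : ℕ} {N : Measure ℝ} [IsProbabilityMeasure N] {i j : Fin m}
    (hij : i ≠ j) :
    (Measure.pi fun _ : Fin k => Measure.pi fun _ : Fin m => N).map
      (fun A => ((fun r => A r i), fun r => A r j)) =
      (Measure.pi fun _ : Fin k => N).prod (Measure.pi fun _ : Fin k => N) := by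
  have hrow : (Measure.pi fun _ : Fin m => N).map (fun a => (a i, a j)) = N.prod N := by
    have hind : iIndepFun (fun r (b : Fin m → ℝ) => b r) (Measure.pi fun _ => N) :=
      iIndepFun_pi (X := fun _ x => x) fun _ => aemeasurable_id
    have h := (hind.indepFun hij).map_prod_eq_prod_map_map
      (measurable_pi_apply i).aemeasurable (measurable_pi_apply j).aemeasurable
    rw [h, (measurePreserving_eval (fun _ : Fin m => N) i).map_eq,
      (measurePreserving_eval (fun _ : Fin m => N) j).map_eq]
  have hpi := Measure.pi_map_pi (μ := fun _ : Fin k => Measure.pi fun _ : Fin m => N)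
    (f := fun _ a => (a i, a j)) fun _ => by fun_prop
  simp only [hrow] at hpi
  rw [← (measurePreserving_arrowProdEquivProdArrow ℝ ℝ (Fin k) (fun _ => N) fun _ => N).map_eq,
    ← hpi, Measure.map_map (MeasurableEquiv.measurable _) (by fun_prop)]
  rfl

theorem measurePreserving_two_columns [NeZero d] :
    MeasurePreserving (fun p : (Fin k → Fin (d + 1) → ℝ) × (Fin k → ℝ) =>
        ((fun r => p.1 r (Fin.last d)), (fun r => p.1 r 0), p.2))
      (roundMeasure k (d + 1)) ((gaussianColumn k).prod (columnLaw k)) := by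
  have hij : Fin.last d ≠ 0 := Fin.last_pos'.ne'
  have hcols : MeasurePreserving (fun A : Fin k → Fin (d + 1) → ℝ =>
      ((fun r => A r (Fin.last d)), fun r => A r 0)) (Measure.pi fun _ => Measure.pi fun _ =>
        gaussianReal 0 (k : ℝ≥0)⁻¹) ((gaussianColumn k).prod (gaussianColumn k)) :=
    ⟨by fun_prop, map_two_columns hij⟩
  exact (measurePreserving_prodAssoc _ _ _).comp (hcols.prod (.id _))

/-- The unit vector at margin `α` from the first basis vector, in the plane spanned by the first
and the last basis vectors. -/
def marginPoint (d : ℕ) (α : ℝ) : Fin (d + 1) → ℝ :=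
  Pi.single 0 α + Pi.single (Fin.last d) √(1 - α ^ 2)

theorem sum_mul_marginPoint (v : Fin (d + 1) → ℝ) (α : ℝ) :
    ∑ s, v s * marginPoint d α s = α * v 0 + √(1 - α ^ 2) * v (Fin.last d) := by
  simp only [marginPoint, Pi.add_apply, mul_add, Finset.sum_add_distrib]
  simp [Pi.single_apply, mul_comm]

theorem hRound_single_zero (A : Fin k → Fin (d + 1) → ℝ) (t : Fin k → ℝ) (r : Fin k) :
    hRound A t (Pi.single 0 1) r = vecRound k (fun i => A i 0) t r := by
  have hcol : matVec A (Pi.single 0 1) r = A r 0 := by simp [matVec, Pi.single_apply]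
  simp only [hRound, vecRound, hcol]

theorem sum_hRound_mul_marginPoint (A : Fin k → Fin (d + 1) → ℝ) (t : Fin k → ℝ) (α : ℝ) :
    ∑ r, hRound A t (Pi.single 0 1) r * ∑ s, A r s * marginPoint d α s =
      α * inner ℝ (vecRound k (fun r => A r 0) t) (WithLp.toLp 2 fun r => A r 0) +
        √(1 - α ^ 2) * inner ℝ (vecRound k (fun r => A r 0) t)
          (WithLp.toLp 2 fun r => A r (Fin.last d)) := by
  simp only [hRound_single_zero, sum_mul_marginPoint, PiLp.inner_apply, Finset.mul_sum,
    ← Finset.sum_add_distrib, RCLike.inner_apply, conj_trivial]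
  exact Finset.sum_congr rfl fun r _ => by ring

theorem roundMeasure_real_marginPoint [NeZero d] (hk : k ≠ 0) (γ : ℝ) (hα : |α| < 1) :
    (roundMeasure k (d + 1)).real {p | γ / 2 < 1 * ∑ r, hRound p.1 p.2 (Pi.single 0 1) r *
      ∑ s, p.1 r s * marginPoint d α s} = marginTail k γ α := by
  have hβ : 0 < √(1 - α ^ 2) := Real.sqrt_pos.2 (sub_pos.2 ((sq_lt_one_iff_abs_lt_one α).2 hα))
  set B : Set ((Fin k → ℝ) × (Fin k → ℝ) × (Fin k → ℝ)) :=
    {q | γ / 2 - α * inner ℝ (vecRound k q.2.1 q.2.2) (WithLp.toLp 2 q.2.1) <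
      √(1 - α ^ 2) * inner ℝ (vecRound k q.2.1 q.2.2) (WithLp.toLp 2 q.1)} with hB
  have hBm : MeasurableSet B := by
    have := measurable_vecRound k
    have := WithLp.measurable_toLp 2 (Fin k → ℝ)
    exact measurableSet_lt (by fun_prop) (by fun_prop)
  have hsection (p : (Fin k → ℝ) × (Fin k → ℝ)) :
      (gaussianColumn k).real ((fun b => (b, p)) ⁻¹' B) = condTail k γ α p :=
    gaussianColumn_real_lt_inner hk hβ (vecRound_ne_zero hk p.1 p.2)
      (γ / 2 - α * inner ℝ (vecRound k p.1 p.2) (WithLp.toLp 2 p.1))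
  calc _ = (roundMeasure k (d + 1)).real ((fun p : (Fin k → Fin (d + 1) → ℝ) × (Fin k → ℝ) =>
        ((fun r => p.1 r (Fin.last d)), (fun r => p.1 r 0), p.2)) ⁻¹' B) := by
        simp only [one_mul, sum_hRound_mul_marginPoint, hB, Set.preimage_ofPred_eq,
          sub_lt_iff_lt_add']
    _ = ((gaussianColumn k).prod (columnLaw k)).real B := by
        rw [measureReal_def, (measurePreserving_two_columns).measure_preimage
          hBm.nullMeasurableSet, measureReal_def]
    _ = ∫ p, (gaussianColumn k).real ((fun b => (b, p)) ⁻¹' B) ∂columnLaw k := by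
        simp only [measureReal_def]
        rw [Measure.prod_apply_symm hBm, integral_toReal
          (measurable_measure_prodMk_right hBm).aemeasurable
          (.of_forall fun _ => measure_lt_top _ _)]
    _ = marginTail k γ α := by simp only [hsection, marginTail]

instance isProbabilityMeasure_roundMeasure (k m : ℕ) :
    IsProbabilityMeasure (roundMeasure k m) := by
  unfold roundMeasure
  infer_instance

theorem measurable_hRound {m : ℕ} (w : Fin m → ℝ) :
    Measurable fun p : (Fin k → Fin m → ℝ) × (Fin k → ℝ) => hRound p.1 p.2 w :=
  (WithLp.measurable_ofLp 2 _).comp <| (measurable_vecRound k).comp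
    (by unfold matVec; fun_prop : Measurable fun p :
      (Fin k → Fin m → ℝ) × (Fin k → ℝ) => (matVec p.1 w, p.2))

theorem roundMeasure_real_marginPoint_le [NeZero d] (hk : k ≠ 0) (γ : ℝ) (hα : |α| < 1) :
    (roundMeasure k (d + 1)).real {p | 1 * ∑ r, hRound p.1 p.2 (Pi.single 0 1) r *
      ∑ s, p.1 r s * marginPoint d α s ≤ γ / 2} = 1 - marginTail k γ α := by
  have := measurable_hRound (k := k) (Pi.single (0 : Fin (d + 1)) (1 : ℝ))
  rw [← roundMeasure_real_marginPoint (d := d) hk γ hα, ← probReal_compl_eq_one_sub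
    (measurableSet_lt (by fun_prop) (by fun_prop)), Set.compl_ofPred]
  simp only [not_lt]

theorem marginPoint_zero [NeZero d] (α : ℝ) : marginPoint d α 0 = α := by
  simp [marginPoint, Fin.last_pos'.ne]

theorem marginPoint_last [NeZero d] (α : ℝ) : marginPoint d α (Fin.last d) = √(1 - α ^ 2) := by
  simp [marginPoint, Fin.last_pos'.ne']

theorem marginPoint_mem_Xset [NeZero d] (hα : |α| ≤ c) (hc : c ≤ 1) :
    marginPoint d α ∈ Xset d c := by
  have hsq : α ^ 2 ≤ c ^ 2 := sq_le_sq.2 (hα.trans (le_abs_self c))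
  have hs : √(1 - α ^ 2) ^ 2 = 1 - α ^ 2 :=
    Real.sq_sqrt (sub_nonneg.2 ((sq_le_one_iff_abs_le_one α).2 (hα.trans hc)))
  have hsum : ∑ j, marginPoint d α j ^ 2 = 1 := by
    simp_rw [pow_two]
    rw [sum_mul_marginPoint, marginPoint_zero, marginPoint_last]
    linear_combination hs
  refine ⟨hsum, ?_⟩
  rw [Fin.sum_univ_castSucc, marginPoint_last, hs] at hsum
  linarith

theorem single_mem_Hset [NeZero d] : Pi.single 0 1 ∈ Hset d :=
  ⟨by simp [Pi.single_apply], by simp [Fin.last_pos'.ne']⟩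

theorem dotp_single_marginPoint [NeZero d] (α : ℝ) :
    1 * dotp (Pi.single 0 1) (marginPoint d α) = α := by
  simp [dotp, Pi.single_apply, marginPoint_zero]

end RoundedMargin

section Interpolation

theorem lipschitzOnWith_Icc_trans {Y : Type*} [PseudoMetricSpace Y] {K : ℝ≥0} {f : ℝ → Y}
    {a b c : ℝ} (hab : LipschitzOnWith K f (Set.Icc a b))
    (hbc : LipschitzOnWith K f (Set.Icc b c)) : LipschitzOnWith K f (Set.Icc a c) := by
  refine .of_dist_le_mul fun x hx y hy => ?_
  wlog hxy : x ≤ y generalizing x y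
  · rw [dist_comm, dist_comm x]
    exact this y hy x hx (le_of_not_ge hxy)
  rcases le_total b x with hbx | hxb
  · exact hbc.dist_le_mul x ⟨hbx, hx.2⟩ y ⟨hbx.trans hxy, hy.2⟩
  rcases le_total y b with hyb | hby
  · exact hab.dist_le_mul x ⟨hx.1, hxb⟩ y ⟨hy.1, hyb⟩
  calc dist (f x) (f y) ≤ dist (f x) (f b) + dist (f b) (f y) := dist_triangle _ _ _
    _ ≤ K * dist x b + K * dist b y :=
        add_le_add (hab.dist_le_mul x ⟨hx.1, hxb⟩ b ⟨hx.1.trans hxb, le_rfl⟩)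
          (hbc.dist_le_mul b ⟨le_rfl, hby.trans hy.2⟩ y ⟨hby, hy.2⟩)
    _ = K * dist x y := by
        rw [Real.dist_eq, Real.dist_eq, Real.dist_eq, abs_of_nonpos (sub_nonpos.2 hxb),
          abs_of_nonpos (sub_nonpos.2 hby), abs_of_nonpos (sub_nonpos.2 hxy)]
        ring

theorem lipschitzOnWith_of_eqOn {X Y : Type*} [PseudoEMetricSpace X] [PseudoEMetricSpace Y]
    {K : ℝ≥0} {f g : X → Y} {s : Set X} (hfg : Set.EqOn f g s) (hg : LipschitzOnWith K g s) :
    LipschitzOnWith K f s := fun x hx y hy => by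
  rw [hfg hx, hfg hy]
  exact hg hx hy

theorem exists_lipschitzWith_eqOn_Icc {K : ℝ≥0} {f : ℝ → ℝ} {a b m M : ℝ} (hab : a ≤ b)
    (hf : LipschitzOnWith K f (Set.Icc a b)) (hfm : Set.MapsTo f (Set.Icc a b) (Set.Icc m M)) :
    ∃ g : ℝ → ℝ, LipschitzWith K g ∧ (∀ x, g x ∈ Set.Icc m M) ∧ Set.EqOn g f (Set.Icc a b) := by
  refine ⟨Set.IccExtend hab ((Set.Icc a b).domRestrict f), ?_,
    fun x => hfm (Set.projIcc a b hab x).2, fun x hx => Set.IccExtend_of_mem hab _ hx⟩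
  have := hf.to_restrict.comp (LipschitzWith.projIcc hab)
  rwa [mul_one] at this

variable {d k : ℕ} {c γ : ℝ}

theorem one_le_of_inv_sq_le (hγ : γ ∈ Set.Ioc 0 (1 / 2)) (hk : ((2 * γ) ^ 2)⁻¹ ≤ (k : ℝ)) :
    1 ≤ k := by
  have hsq : (2 * γ) ^ 2 ≤ 1 := by nlinarith [hγ.1, hγ.2]
  exact_mod_cast ((one_le_inv₀ (by have := hγ.1; positivity)).2 hsq).trans hk

theorem one_div_le_two_mul_sqrt (hγ : 0 < γ) (hk : ((2 * γ) ^ 2)⁻¹ ≤ (k : ℝ)) : 1 / γ ≤ 2 * √k := by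
  have : (2 * γ)⁻¹ ≤ √k := Real.le_sqrt_of_sq_le (by rwa [inv_pow])
  calc 1 / γ = 2 * (2 * γ)⁻¹ := by field_simp
    _ ≤ 2 * √k := by gcongr

theorem lipschitzOnWith_marginTail (hk : 1 ≤ k) (hγ : γ ∈ Set.Icc 0 1) {s : Set ℝ}
    (hs : Convex ℝ s) (hsγ : s ⊆ Set.Icc (-1 / 2) 0 ∪ Set.Icc γ (1 / 2)) :
    LipschitzOnWith (36 * √k * Real.exp (-(k * γ ^ 2 / 3200))).toNNReal (marginTail k γ) s :=
  .of_dist_le' fun _ hα _ hβ => abs_marginTail_sub_le hk hγ hs hsγ hβ hα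

theorem lipschitzOnWith_one_sub_marginTail (hk : 1 ≤ k) (hγ : γ ∈ Set.Icc 0 1) {s : Set ℝ}
    (hs : Convex ℝ s) (hsγ : s ⊆ Set.Icc (-1 / 2) 0 ∪ Set.Icc γ (1 / 2)) :
    LipschitzOnWith (36 * √k * Real.exp (-(k * γ ^ 2 / 3200))).toNNReal
      (fun α => 1 - marginTail k γ α) s := fun α hα β hβ => by
  rw [edist_sub_left]
  exact lipschitzOnWith_marginTail hk hγ hs hsγ hα hβ

theorem lipschitzOnWith_div_mul (hγ : 0 < γ) (hk : ((2 * γ) ^ 2)⁻¹ ≤ (k : ℝ)) {E T b : ℝ}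
    (hE : 0 ≤ E) (hT : 0 ≤ T) (hTE : T ≤ 9 / 2 * E) (s : Set ℝ) :
    LipschitzOnWith (36 * √k * E).toNNReal (fun α => |α - b| / γ * T) s := by
  refine .of_dist_le' fun α _ β _ => ?_
  have hslope : T / γ ≤ 36 * √k * E :=
    calc T / γ = 1 / γ * T := by ring
      _ ≤ 2 * √k * (9 / 2 * E) := by
        gcongr
        exact one_div_le_two_mul_sqrt hγ hk
      _ ≤ 36 * √k * E := by nlinarith [mul_nonneg (Real.sqrt_nonneg k) hE]
  calc dist (|α - b| / γ * T) (|β - b| / γ * T) = |T / γ * (|α - b| - |β - b|)| := by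
        rw [Real.dist_eq]
        ring_nf
    _ = T / γ * |(|α - b| - |β - b|)| := by rw [abs_mul, abs_of_nonneg (div_nonneg hT hγ.le)]
    _ ≤ 36 * √k * E * dist α β := by
        gcongr
        exact (abs_abs_sub_abs_le_abs_sub _ _).trans_eq (by rw [sub_sub_sub_cancel_right]; rfl)

namespace phiSpec

variable {φ : ℝ → ℝ}

theorem eqOn_marginTail [NeZero d] (hφ : phiSpec d k c γ φ) (hk : k ≠ 0) (hc : c ≤ 1 / 2) :
    Set.EqOn φ (marginTail k γ) (Set.Icc (-c) 0) := fun α hα => by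
  have habs : |α| ≤ c := abs_le.2 ⟨hα.1, by linarith [hα.1, hα.2]⟩
  have h := hφ.1 _ _ 1 (single_mem_Hset (d := d)) (marginPoint_mem_Xset habs (by linarith))
    (.inl rfl) (by rw [dotp_single_marginPoint]; exact hα.2)
  rwa [dotp_single_marginPoint, ← measureReal_def,
    roundMeasure_real_marginPoint hk γ (by linarith)] at h

theorem eqOn_linear [NeZero d] (hφ : phiSpec d k c γ φ) (hk : k ≠ 0) (hc : c ∈ Set.Icc 0 (1 / 2))
    (hγ : 0 < γ) :
    Set.EqOn φ (fun α => |α - γ| / γ * marginTail k γ 0) (Set.Icc 0 γ) := fun α hα => by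
  have hzero := hφ.eqOn_marginTail hk hc.2 ⟨neg_nonpos.2 hc.1, le_rfl⟩
  rcases hα.1.eq_or_lt with rfl | hpos
  · simp [hzero, abs_of_pos hγ, hγ.ne']
  · rw [hφ.2.1 α hpos hα.2, hzero, ← abs_of_nonneg (sub_nonneg.2 hα.2), abs_sub_comm]

theorem eqOn_zero (hφ : phiSpec d k c γ φ) (hγ : 0 < γ) :
    Set.EqOn φ (fun _ => 0) (Set.Icc γ c) := fun α hα => by
  rcases hα.1.eq_or_lt with rfl | hlt
  · simp [hφ.2.1 γ hγ le_rfl]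
  · exact hφ.2.2 α hlt hα.2

theorem lipschitzOnWith [NeZero d] (hφ : phiSpec d k c γ φ) (hγ : γ ∈ Set.Ioc 0 c)
    (hc : c ≤ 1 / 2) (hk : ((2 * γ) ^ 2)⁻¹ ≤ (k : ℝ)) :
    LipschitzOnWith (36 * √k * Real.exp (-(k * γ ^ 2 / 3200))).toNNReal φ (Set.Icc (-c) c) := by
  have hk₁ : 1 ≤ k := one_le_of_inv_sq_le ⟨hγ.1, hγ.2.trans hc⟩ hk
  have hγ₁ : γ ∈ Set.Icc 0 1 := ⟨hγ.1.le, by linarith [hγ.2]⟩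
  have hc₀ : 0 ≤ c := hγ.1.le.trans hγ.2
  have hneg := lipschitzOnWith_of_eqOn (hφ.eqOn_marginTail (by omega) hc) <|
    lipschitzOnWith_marginTail hk₁ hγ₁ (convex_Icc (-c) 0)
      ((Set.Icc_subset_Icc_left (by linarith)).trans Set.subset_union_left)
  have hmid := lipschitzOnWith_of_eqOn (hφ.eqOn_linear (by omega) ⟨hc₀, hc⟩ hγ.1) <|
    lipschitzOnWith_div_mul hγ.1 hk (Real.exp_nonneg _) (marginTail_nonneg k γ 0)
      (marginTail_le hk₁ hγ₁ (by norm_num)) (Set.Icc 0 γ)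
  exact lipschitzOnWith_Icc_trans hneg <| lipschitzOnWith_Icc_trans hmid <|
    lipschitzOnWith_of_eqOn (hφ.eqOn_zero hγ.1) (LipschitzWith.const' 0).lipschitzOnWith

theorem mapsTo [NeZero d] (hφ : phiSpec d k c γ φ) (hγ : γ ∈ Set.Ioc 0 c)
    (hc : c ≤ 1 / 2) (hk : 1 ≤ k) :
    Set.MapsTo φ (Set.Icc (-c) c) (Set.Icc 0 (9 / 2 * Real.exp (-(k * γ ^ 2 / 3200)))) :=
    fun α hα => by
  have hc₀ : 0 ≤ c := hγ.1.le.trans hγ.2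
  have htail (β : ℝ) (hβ : β ∈ Set.Icc (-1 / 2) 0) := marginTail_le hk
    (γ := γ) ⟨hγ.1.le, by linarith [hγ.2]⟩ hβ
  rcases le_total α 0 with h₀ | h₀
  · rw [hφ.eqOn_marginTail (by omega) hc ⟨hα.1, h₀⟩]
    exact ⟨marginTail_nonneg _ _ _, htail α ⟨by linarith [hα.1], h₀⟩⟩
  rcases le_total α γ with hle | hle
  · rw [hφ.eqOn_linear (by omega) ⟨hc₀, hc⟩ hγ.1 ⟨h₀, hle⟩]
    have := marginTail_nonneg k γ 0
    have hγ₀ := hγ.1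
    refine ⟨by positivity, (mul_le_of_le_one_left this ?_).trans (htail 0 (by norm_num))⟩
    rw [div_le_one hγ₀, abs_sub_comm, abs_of_nonneg (sub_nonneg.2 hle)]
    linarith
  · rw [hφ.eqOn_zero hγ.1 ⟨hle, hα.2⟩]
    exact ⟨le_rfl, by positivity⟩

end phiSpec

namespace rhoSpec

variable {ρ : ℝ → ℝ}

theorem eqOn_zero (hρ : rhoSpec d k c γ ρ) : Set.EqOn ρ (fun _ => 0) (Set.Icc (-c) 0) :=
  fun α hα => hρ.2.2 α hα.1 hα.2

theorem eqOn_linear [NeZero d] (hρ : rhoSpec d k c γ ρ) (hk : k ≠ 0) (hγ : γ ∈ Set.Ioc 0 c)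
    (hc : c ≤ 1 / 2) :
    Set.EqOn ρ (fun α => |α - 0| / γ * (1 - marginTail k γ γ)) (Set.Icc 0 γ) := fun α hα => by
  have hγc : |γ| ≤ c := (abs_of_pos hγ.1).trans_le hγ.2
  rcases hα.1.eq_or_lt with rfl | hpos
  · simp [hρ.eqOn_zero ⟨neg_nonpos.2 (hγ.1.le.trans hγ.2), le_rfl⟩]
  · rw [hρ.2.1 α hpos hα.2 _ _ 1 (single_mem_Hset (d := d))
      (marginPoint_mem_Xset hγc (by linarith)) (.inl rfl) (dotp_single_marginPoint γ),
      ← measureReal_def, roundMeasure_real_marginPoint_le hk γ (by linarith)]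
    simp only [sub_zero, abs_of_pos hpos]

theorem eqOn_one_sub_marginTail [NeZero d] (hρ : rhoSpec d k c γ ρ) (hk : k ≠ 0)
    (hγ : γ ∈ Set.Ioc 0 c) (hc : c ≤ 1 / 2) :
    Set.EqOn ρ (fun α => 1 - marginTail k γ α) (Set.Icc γ c) := fun α hα => by
  have habs : |α| ≤ c := (abs_of_pos (hγ.1.trans_le hα.1)).trans_le hα.2
  rcases hα.1.eq_or_lt with rfl | hlt
  · simp [hρ.eqOn_linear hk hγ hc ⟨hγ.1.le, le_rfl⟩, hγ.1.ne', abs_of_pos hγ.1]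
  · have h := hρ.1 _ _ 1 (single_mem_Hset (d := d)) (marginPoint_mem_Xset habs (by linarith))
      (.inl rfl) (by rwa [dotp_single_marginPoint])
    rwa [dotp_single_marginPoint, ← measureReal_def,
      roundMeasure_real_marginPoint_le hk γ (by linarith)] at h

theorem lipschitzOnWith [NeZero d] (hρ : rhoSpec d k c γ ρ) (hγ : γ ∈ Set.Ioc 0 c)
    (hc : c ≤ 1 / 2) (hk : ((2 * γ) ^ 2)⁻¹ ≤ (k : ℝ)) :
    LipschitzOnWith (36 * √k * Real.exp (-(k * γ ^ 2 / 3200))).toNNReal ρ (Set.Icc (-c) c) := by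
  have hk₁ : 1 ≤ k := one_le_of_inv_sq_le ⟨hγ.1, hγ.2.trans hc⟩ hk
  have hγ₁ : γ ∈ Set.Icc 0 1 := ⟨hγ.1.le, by linarith [hγ.2]⟩
  have hmid := lipschitzOnWith_of_eqOn (hρ.eqOn_linear (by omega) hγ hc) <|
    lipschitzOnWith_div_mul hγ.1 hk (Real.exp_nonneg _) (sub_nonneg.2 (marginTail_le_one k γ γ))
      (one_sub_marginTail_le hk₁ hγ₁ ⟨le_rfl, hγ.2.trans hc⟩) (Set.Icc 0 γ)
  have hpos := lipschitzOnWith_of_eqOn (hρ.eqOn_one_sub_marginTail (by omega) hγ hc) <|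
    lipschitzOnWith_one_sub_marginTail hk₁ hγ₁ (convex_Icc γ c)
      ((Set.Icc_subset_Icc_right hc).trans Set.subset_union_right)
  exact lipschitzOnWith_Icc_trans (lipschitzOnWith_of_eqOn hρ.eqOn_zero
    (LipschitzWith.const' 0).lipschitzOnWith) (lipschitzOnWith_Icc_trans hmid hpos)

theorem mapsTo [NeZero d] (hρ : rhoSpec d k c γ ρ) (hγ : γ ∈ Set.Ioc 0 c)
    (hc : c ≤ 1 / 2) (hk : 1 ≤ k) :
    Set.MapsTo ρ (Set.Icc (-c) c) (Set.Icc 0 (9 / 2 * Real.exp (-(k * γ ^ 2 / 3200)))) :=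
    fun α hα => by
  have htail (β : ℝ) (hβ : β ∈ Set.Icc γ (1 / 2)) := one_sub_marginTail_le hk
    (γ := γ) ⟨hγ.1.le, by linarith [hγ.2]⟩ hβ
  have htail₀ (β : ℝ) := sub_nonneg.2 (marginTail_le_one k γ β)
  rcases le_total α 0 with h₀ | h₀
  · rw [hρ.eqOn_zero ⟨hα.1, h₀⟩]
    exact ⟨le_rfl, by positivity⟩
  rcases le_total α γ with hle | hle
  · rw [hρ.eqOn_linear (by omega) hγ hc ⟨h₀, hle⟩]
    refine ⟨mul_nonneg (div_nonneg (abs_nonneg _) hγ.1.le) (htail₀ γ),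
      (mul_le_of_le_one_left (htail₀ γ) ?_).trans (htail γ ⟨le_rfl, hγ.2.trans hc⟩)⟩
    rwa [div_le_one hγ.1, sub_zero, abs_of_nonneg h₀]
  · rw [hρ.eqOn_one_sub_marginTail (by omega) hγ hc ⟨hle, hα.2⟩]
    exact ⟨htail₀ α, htail α ⟨hle, hα.2.trans hc⟩⟩

end rhoSpec

end Interpolation

section Sample

variable {d n k : ℕ} {c γ δ : ℝ}

theorem measurableSet_Xset (d : ℕ) (c : ℝ) : MeasurableSet (Xset d c) := by
  have : Measurable fun x : Fin (d + 1) → ℝ => ∑ j : Fin d, x j.castSucc ^ 2 := by fun_prop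
  exact (measurableSet_eq_fun (by fun_prop) measurable_const).inter
    (measurableSet_le this measurable_const)

/-- The examples of the reduced setup: a point of `Xset d c` with a label `±1`. -/
def labelledXset (d : ℕ) (c : ℝ) : Set ((Fin (d + 1) → ℝ) × ℝ) :=
  {p | p.1 ∈ Xset d c ∧ (p.2 = 1 ∨ p.2 = -1)}

theorem measurableSet_labelledXset (d : ℕ) (c : ℝ) : MeasurableSet (labelledXset d c) :=
  (measurable_fst (measurableSet_Xset d c)).inter
    ((measurable_snd (measurableSet_singleton 1)).union
      (measurable_snd (measurableSet_singleton (-1))))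

theorem abs_snd_of_mem_labelledXset {p : (Fin (d + 1) → ℝ) × ℝ} (hp : p ∈ labelledXset d c) :
    |p.2| = 1 := by
  rcases hp.2 with h | h <;> simp [h]

theorem abs_dotp_le (hc : 0 ≤ c) {w x : Fin (d + 1) → ℝ} (hw : w ∈ Hset d) (hx : x ∈ Xset d c) :
    |dotp w x| ≤ c := by
  have hsum := hw.1
  rw [Fin.sum_univ_castSucc, hw.2, zero_pow two_ne_zero, add_zero] at hsum
  refine abs_le_of_sq_le_sq ?_ hc
  calc dotp w x ^ 2 = (∑ j : Fin d, w j.castSucc * x j.castSucc) ^ 2 := by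
        rw [dotp, Fin.sum_univ_castSucc, hw.2, zero_mul, add_zero]
    _ ≤ (∑ j : Fin d, w j.castSucc ^ 2) * ∑ j : Fin d, x j.castSucc ^ 2 :=
        Finset.sum_mul_sq_le_sq_mul_sq _ _ _
    _ ≤ c ^ 2 := by rw [hsum, one_mul]; exact hx.2

/-- The example `(x, y)` encoded as `y x`, on which margins are linear in the hypothesis. -/
def signedPoint {m : ℕ} (p : (Fin m → ℝ) × ℝ) : EuclideanSpace ℝ (Fin m) :=
  WithLp.toLp 2 (p.2 • p.1)

theorem measurable_signedPoint {m : ℕ} : Measurable (signedPoint (m := m)) :=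
  (WithLp.measurable_toLp 2 _).comp (by fun_prop)

theorem inner_signedPoint {m : ℕ} (w : Fin m → ℝ) (p : (Fin m → ℝ) × ℝ) :
    inner ℝ (WithLp.toLp 2 w) (signedPoint p) = p.2 * dotp w p.1 := by
  simp only [signedPoint, dotp, PiLp.inner_apply, Finset.mul_sum, Pi.smul_apply, smul_eq_mul,
    RCLike.inner_apply, conj_trivial]
  exact Finset.sum_congr rfl fun j _ => by ring

theorem norm_signedPoint {p : (Fin (d + 1) → ℝ) × ℝ} (hp : p ∈ labelledXset d c) :
    ‖signedPoint p‖ = 1 := by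
  rw [signedPoint, WithLp.toLp_smul, norm_smul, Real.norm_eq_abs, abs_snd_of_mem_labelledXset hp,
    one_mul, EuclideanSpace.norm_eq]
  simp [hp.1.1]

theorem trainM_exists_lt_abs_deviation_le (hn : 1 ≤ n) (hc : 0 ≤ c)
    {D : Measure ((Fin (d + 1) → ℝ) × ℝ)} [IsProbabilityMeasure D]
    (hD : ∀ᵐ p ∂D, p ∈ labelledXset d c) {ψ : ℝ → ℝ} {K : ℝ≥0} {a b : ℝ} (hab : a < b)
    (hψ : LipschitzOnWith K ψ (Set.Icc (-c) c))
    (hψab : Set.MapsTo ψ (Set.Icc (-c) c) (Set.Icc a b)) (hδ : 0 < δ) (hδ₁ : δ ≤ 1) :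
    trainM D n {S | ∃ w ∈ Hset d, 2 * K / √n + (b - a) * √(Real.log (1 / δ) / (2 * n)) <
        |(∫ q, ψ (q.2 * dotp w q.1) ∂D) - (∑ r, ψ ((S r).2 * dotp w (S r).1)) / n|} ≤
      ENNReal.ofReal (2 * δ) := by
  obtain ⟨g, hg, hgab, hgψ⟩ := exists_lipschitzWith_eqOn_Icc (by linarith) hψ hψab
  have hψg {w} (hw : w ∈ Hset d) {p} (hp : p ∈ labelledXset d c) :
      ψ (p.2 * dotp w p.1) = g (inner ℝ (WithLp.toLp 2 w) (signedPoint p)) := by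
    rw [inner_signedPoint, hgψ]
    rw [Set.mem_Icc, ← abs_le, abs_mul, abs_snd_of_mem_labelledXset hp, one_mul]
    exact abs_dotp_le hc hw hp.1
  have hZ := measurable_signedPoint (m := d + 1)
  have : IsProbabilityMeasure (D.map signedPoint) :=
    Measure.isProbabilityMeasure_map hZ.aemeasurable
  have hSample : ∀ᵐ S ∂trainM D n, ∀ r, S r ∈ labelledXset d c :=
    ae_all_iff.2 fun r =>
      (measurePreserving_eval (fun _ : Fin n => D) r).quasiMeasurePreserving.ae hD
  have hmap : (trainM D n).map (fun S r => signedPoint (S r)) =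
      Measure.pi fun _ => D.map signedPoint :=
    Measure.pi_map_pi fun _ => hZ.aemeasurable
  refine (measure_mono_ae ?_).trans <| (Measure.le_map_apply
    (measurable_pi_lambda _ fun r => hZ.comp (measurable_pi_apply r)).aemeasurable _).trans <|
      hmap ▸
      measure_exists_lt_abs_integral_sub_average_le hg hgab hab
        ((ae_map_iff hZ.aemeasurable (measurableSet_le (by fun_prop) measurable_const)).2
          (hD.mono fun p hp => (norm_signedPoint hp).le)) hn hδ hδ₁
  filter_upwards [hSample] with S hS
  rintro ⟨w, hw, hlt⟩
  refine ⟨WithLp.toLp 2 w, by rw [EuclideanSpace.norm_eq]; simp [hw.1], ?_⟩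
  rw [integral_map hZ.aemeasurable (by have := hg.continuous; fun_prop)]
  rwa [integral_congr_ae (hD.mono fun p hp => hψg hw hp),
    Finset.sum_congr rfl fun r _ => hψg hw (hS r)] at hlt

theorem log_four_div_le (hδ : 0 < δ) (hδ₁ : δ ≤ 1) :
    Real.log (1 / (δ / 4)) ≤ 2 * Real.log (Real.exp 1 / δ) := by
  have hlog : 0 ≤ Real.log δ⁻¹ := Real.log_nonneg ((one_le_inv₀ hδ).2 hδ₁)
  calc Real.log (1 / (δ / 4)) = Real.log 2 + Real.log 2 + Real.log δ⁻¹ := by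
        rw [← Real.log_mul two_ne_zero two_ne_zero, ← Real.log_mul (by norm_num) (by positivity)]
        congr 1
        field_simp
        norm_num
    _ ≤ 2 * (1 + Real.log δ⁻¹) := by linarith [Real.log_two_lt_d9]
    _ = 2 * Real.log (Real.exp 1 / δ) := by
        rw [div_eq_mul_inv, Real.log_mul (Real.exp_pos 1).ne' (by positivity), Real.log_exp]

theorem deviation_bound_le (hδ : 0 < δ) (hδ₁ : δ ≤ 1) {E A : ℝ} (hE : 0 ≤ E) (hA : 0 ≤ A) :
    2 * (36 * √k * E) / √n + (9 / 2 * E) * √(Real.log (1 / (δ / 4)) / (2 * n)) ≤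
      12800 * E * √((k + A + Real.log (Real.exp 1 / δ)) / n) := by
  have hlog : 0 ≤ Real.log (Real.exp 1 / δ) :=
    Real.log_nonneg ((one_le_div hδ).2 (hδ₁.trans (Real.one_le_exp zero_le_one)))
  set V := (k + A + Real.log (Real.exp 1 / δ)) / n with hV
  have hkV : √k / √n ≤ √V := by
    rw [← Real.sqrt_div k.cast_nonneg]
    exact Real.sqrt_le_sqrt (by rw [hV]; gcongr; linarith)
  have hlogV : Real.log (1 / (δ / 4)) / (2 * n) ≤ V :=
    calc Real.log (1 / (δ / 4)) / (2 * n) ≤ 2 * Real.log (Real.exp 1 / δ) / (2 * n) := by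
          gcongr
          exact log_four_div_le hδ hδ₁
      _ = Real.log (Real.exp 1 / δ) / n := mul_div_mul_left _ _ two_ne_zero
      _ ≤ V := by
          rw [hV]
          gcongr
          linarith [(k.cast_nonneg : (0 : ℝ) ≤ k)]
  calc 2 * (36 * √k * E) / √n + (9 / 2 * E) * √(Real.log (1 / (δ / 4)) / (2 * n))
      = 72 * E * (√k / √n) + 9 / 2 * E * √(Real.log (1 / (δ / 4)) / (2 * n)) := by ring
    _ ≤ 72 * E * √V + 9 / 2 * E * √V := by gcongr
    _ ≤ 12800 * E * √V := by nlinarith [mul_nonneg hE (Real.sqrt_nonneg V)]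

theorem trainM_exists_bound_lt_le (hn : 1 ≤ n) (hc : 0 ≤ c)
    {D : Measure ((Fin (d + 1) → ℝ) × ℝ)} [IsProbabilityMeasure D]
    (hD : ∀ᵐ p ∂D, p ∈ labelledXset d c) {ψ : ℝ → ℝ} {E A : ℝ} (hE : 0 < E) (hA : 0 ≤ A)
    (hψ : LipschitzOnWith (36 * √k * E).toNNReal ψ (Set.Icc (-c) c))
    (hψE : Set.MapsTo ψ (Set.Icc (-c) c) (Set.Icc 0 (9 / 2 * E))) (hδ : 0 < δ) (hδ₁ : δ ≤ 1) :
    trainM D n {S | ∃ w ∈ Hset d, 12800 * E * √((k + A + Real.log (Real.exp 1 / δ)) / n) <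
        |(∫ q, ψ (q.2 * dotp w q.1) ∂D) - (∑ r, ψ ((S r).2 * dotp w (S r).1)) / n|} ≤
      ENNReal.ofReal (δ / 2) := by
  have hdev := trainM_exists_lt_abs_deviation_le hn hc hD (by positivity) hψ hψE
    (δ := δ / 4) (by linarith) (by linarith)
  rw [Real.coe_toNNReal _ (by positivity), sub_zero, show 2 * (δ / 4) = δ / 2 by ring] at hdev
  refine (measure_mono ?_).trans hdev
  rintro S ⟨w, hw, hlt⟩
  exact ⟨w, hw, (deviation_bound_le hδ hδ₁ hE.le hA).trans_lt hlt⟩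

theorem ofReal_one_sub_le_measure {Ω : Type*} [MeasurableSpace Ω] {μ : Measure Ω}
    [IsProbabilityMeasure μ] {A B : Set Ω} (hδ : 0 ≤ δ) (hA : μ A ≤ ENNReal.ofReal (δ / 2))
    (hB : μ B ≤ ENNReal.ofReal (δ / 2)) : ENNReal.ofReal (1 - δ) ≤ μ (A ∪ B)ᶜ := by
  have hAB : μ (A ∪ B) ≤ ENNReal.ofReal δ := by
    refine (measure_union_le A B).trans ((add_le_add hA hB).trans_eq ?_)
    rw [← ENNReal.ofReal_add (by linarith) (by linarith), add_halves]
  rw [ENNReal.ofReal_sub _ hδ, ENNReal.ofReal_one, tsub_le_iff_right]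
  calc 1 = μ ((A ∪ B)ᶜ ∪ (A ∪ B)) := by rw [Set.compl_union_self, measure_univ]
    _ ≤ μ (A ∪ B)ᶜ + ENNReal.ofReal δ := (measure_union_le _ _).trans (by gcongr)

theorem Hset_zero : Hset 0 = ∅ := Set.eq_empty_of_forall_notMem fun w hw => by
  have h := hw.1
  simp [show w 0 = 0 from hw.2] at h

theorem γhi_eq_two_mul_γlo {i : ℕ} (hi : 1 ≤ i) : γhi n i = 2 * γlo n i := by
  rw [γhi, γlo, ← mul_div_assoc, mul_pow_sub_one (by omega)]

end Sample

instance isProbabilityMeasure_trainM {m : ℕ} (D : Measure ((Fin m → ℝ) × ℝ))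
    [IsProbabilityMeasure D] (n : ℕ) : IsProbabilityMeasure (trainM D n) := by
  unfold trainM
  infer_instance

theorem statement8_general {d n k : ℕ} (hn : 1 ≤ n) {c γ δ : ℝ} (hc : c ≤ 1 / 2)
    (hγ : γ ∈ Set.Ioc 0 c) (hk : ((2 * γ) ^ 2)⁻¹ ≤ (k : ℝ))
    {D : Measure ((Fin (d + 1) → ℝ) × ℝ)} [IsProbabilityMeasure D]
    (hD : D {p | p.1 ∈ Xset d c ∧ (p.2 = 1 ∨ p.2 = -1)} = 1) {φ ρ : ℝ → ℝ}
    (hφ : phiSpec d k c γ φ) (hρ : rhoSpec d k c γ ρ) (hδ : 0 < δ) (hδ₁ : δ < 1) :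
    ENNReal.ofReal (1 - δ) ≤ trainM D n {S | ∀ w ∈ Hset d,
      |(∫ q, φ (q.2 * dotp w q.1) ∂D) - (∑ r, φ ((S r).2 * dotp w (S r).1)) / n| ≤
        12800 * Real.exp (-((2 * γ) ^ 2) * k / 12800) *
          √((k + ((2 * γ) ^ 2)⁻¹ + Real.log (Real.exp 1 / δ)) / n) ∧
      |(∫ q, ρ (q.2 * dotp w q.1) ∂D) - (∑ r, ρ ((S r).2 * dotp w (S r).1)) / n| ≤
        12800 * Real.exp (-((2 * γ) ^ 2) * k / 12800) *
          √((k + ((2 * γ) ^ 2)⁻¹ + Real.log (Real.exp 1 / δ)) / n)} := by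
  rcases eq_or_ne d 0 with rfl | hd
  · simp [Hset_zero, hδ.le]
  have : NeZero d := ⟨hd⟩
  have hk₁ := one_le_of_inv_sq_le ⟨hγ.1, hγ.2.trans hc⟩ hk
  have hc₀ : 0 ≤ c := hγ.1.le.trans hγ.2
  have hDae : ∀ᵐ p ∂D, p ∈ labelledXset d c :=
    (mem_ae_iff_prob_eq_one (measurableSet_labelledXset d c)).2 hD
  have hA : 0 ≤ ((2 * γ) ^ 2)⁻¹ := by positivity
  have hφdev := trainM_exists_bound_lt_le hn hc₀ hDae (Real.exp_pos _) hA
    (hφ.lipschitzOnWith hγ hc hk) (hφ.mapsTo hγ hc hk₁) hδ hδ₁.le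
  have hρdev := trainM_exists_bound_lt_le hn hc₀ hDae (Real.exp_pos _) hA
    (hρ.lipschitzOnWith hγ hc hk) (hρ.mapsTo hγ hc hk₁) hδ hδ₁.le
  rw [show -((2 * γ) ^ 2) * k / 12800 = -(k * γ ^ 2 / 3200) by ring]
  refine (ofReal_one_sub_le_measure hδ.le hφdev hρdev).trans (measure_mono fun S hS w hw => ?_)
  simp only [Set.mem_compl_iff, Set.mem_union, Set.mem_ofPred_eq, not_or, not_exists, not_and,
    not_lt] at hS
  exact ⟨hS.1 w hw, hS.2 w hw⟩

/-- (Lemma 3.7, Rademacher bound.) With probability `1 - δ` over the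
sample, the empirical averages of `φ(y⟨w,x⟩)` and `ρ(y⟨w,x⟩)` are uniformly close to
their expectations over `H(Γ_i, L_j)`. -/
theorem statement8 : ∃ cγ c c' : ℝ, 0 < cγ ∧ cγ ≤ (Real.sqrt 2)⁻¹ ∧ 0 < c ∧ 0 < c' ∧
    ∀ (d n k : ℕ), 1 ≤ n →
    ∀ i j : ℕ, 1 ≤ i → (2 : ℝ) ^ i ≤ cγ * Real.sqrt n → (2 : ℝ) ^ j ≤ (n : ℝ) →
    c' * (γhi n i ^ 2)⁻¹ ≤ (k : ℝ) →
    ∀ D : Measure ((Fin (d+1) → ℝ) × ℝ), IsProbabilityMeasure D →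
    D {p | p.1 ∈ Xset d cγ ∧ (p.2 = 1 ∨ p.2 = -1)} = 1 →
    ∀ φ ρ : ℝ → ℝ, phiSpec d k cγ (γlo n i) φ → rhoSpec d k cγ (γlo n i) ρ →
    ∀ δ : ℝ, 0 < δ → δ < 1 →
    ENNReal.ofReal (1 - δ) ≤ trainM D n {S |
      ∀ w, w ∈ Hset d → lossD D (3 / 4 * γlo n i) w ∈ Lset n j →
      |(∫ q, φ (q.2 * dotp w q.1) ∂D) - (∑ r, φ ((S r).2 * dotp w (S r).1)) / n| ≤
        c * Real.exp (-(γhi n i ^ 2) * k / c) *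
          Real.sqrt (((k : ℝ) + (γhi n i ^ 2)⁻¹ + Real.log (Real.exp 1 / δ)) / n) ∧
      |(∫ q, ρ (q.2 * dotp w q.1) ∂D) - (∑ r, ρ ((S r).2 * dotp w (S r).1)) / n| ≤
        c * Real.exp (-(γhi n i ^ 2) * k / c) *
          Real.sqrt (((k : ℝ) + (γhi n i ^ 2)⁻¹ + Real.log (Real.exp 1 / δ)) / n)} := by
  have hsqrt : √2 ≤ 2 := Real.sqrt_le_iff.2 ⟨by norm_num, by norm_num⟩
  refine ⟨1 / 2, 12800, 1, by norm_num, by rw [one_div]; gcongr, by norm_num, one_pos, ?_⟩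
  intro d n k hn i j hi hin _ hk D _ hD φ ρ hφ hρ δ hδ hδ₁
  have hn₀ : (0 : ℝ) < √n := Real.sqrt_pos.2 (by exact_mod_cast hn)
  have hγ : 0 < γlo n i := by unfold γlo; positivity
  have hγhi : γhi n i ≤ 1 / 2 := (div_le_iff₀ hn₀).2 hin
  rw [γhi_eq_two_mul_γlo hi] at hγhi hk ⊢
  rw [one_mul] at hk
  refine (statement8_general hn le_rfl ⟨hγ, by linarith⟩ hk hD hφ hρ hδ hδ₁).trans ?_
  exact measure_mono fun S hS w hw _ => hS w hw
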